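/- Let n ≥ 8 and m ≥ 2, and let Aut(F_n, m) be the level m congruence subgroup of Aut(F_n), namely the kernel of the composite homomorphism Aut(F_n) → Aut(ℤ^n) → Aut((ℤ/mℤ)^n) given by the action on the abelianization of F_n reduced modulo m. Then any orientation preserving C^1 action of Aut(F_n, m) on the circle cannot be faithful; that is, every group homomorphism Aut(F_n, m) → Diff^1_+(S^1) has nontrivial kernel. -/

import Mathlib

noncomputable section

open MeasureTheory

/-- The circle `S¹ = ℝ/ℤ`. -/
abbrev 𝕊 : Type := AddCircle (1 : ℝ)

/-- `F : ℝ → ℝ` is a lift of the circle bijection `f` witnessing that `f` is an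
orientation preserving homeomorphism of the circle: `F` is a strictly increasing
homeomorphism of `ℝ` (equivalently, continuous and strictly increasing) satisfying
`F (x + 1) = F x + 1`, and projecting to `f`. -/
def IsOPLift (f : Equiv.Perm 𝕊) (F : ℝ → ℝ) : Prop :=
  Continuous F ∧ StrictMono F ∧ (∀ x : ℝ, F (x + 1) = F x + 1) ∧
    ∀ x : ℝ, f (x : 𝕊) = (F x : 𝕊)

/-- `f` is an orientation preserving homeomorphism of the circle. -/
def IsOPHomeo (f : Equiv.Perm 𝕊) : Prop := ∃ F : ℝ → ℝ, IsOPLift f F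

/-- `F` is a lift witnessing that `f` is an orientation preserving `C¹` diffeomorphism
of the circle: an orientation preserving lift which is `C¹` with nowhere vanishing
derivative. -/
def IsC1Lift (f : Equiv.Perm 𝕊) (F : ℝ → ℝ) : Prop :=
  IsOPLift f F ∧ ContDiff ℝ 1 F ∧ ∀ x : ℝ, deriv F x ≠ 0

/-- `f` is an orientation preserving `C¹` diffeomorphism of the circle, i.e. an element
of `Diff¹₊(S¹)`. -/
def IsC1Diffeo (f : Equiv.Perm 𝕊) : Prop := ∃ F : ℝ → ℝ, IsC1Lift f F

/-- The free group of rank `n`. -/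
abbrev FreeGrp (n : ℕ) : Type := FreeGroup (Fin n)

/-- The automorphism group `Aut(Fₙ)`. -/
abbrev AutF (n : ℕ) : Type := MulAut (FreeGrp n)

/-- The subgroup `IAₙ ≤ Aut(Fₙ)` of automorphisms acting trivially on the abelianization
`Fₙ^{ab} ≅ ℤⁿ`, i.e. the kernel of the natural map `Aut(Fₙ) → Aut(ℤⁿ)`. -/
def IA (n : ℕ) : Subgroup (AutF n) where
  carrier := {e | ∀ x : FreeGrp n, Abelianization.of (e x) = Abelianization.of x}
  one_mem' := fun _ => rfl
  mul_mem' := by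
    intro a b ha hb x
    have h : (a * b) x = a (b x) := rfl
    rw [h, ha (b x), hb x]
  inv_mem' := by
    intro a ha x
    have h := ha (a⁻¹ x)
    have h' : a (a⁻¹ x) = x := a.apply_symm_apply x
    rw [h'] at h
    exact h.symm

/-- The canonical projection `Fₙ → (ℤ/mℤ)ⁿ` (target written multiplicatively): the
abelianization map `Fₙ → ℤⁿ` followed by reduction modulo `m`; it sends the `i`-th free
generator to the `i`-th standard basis vector. -/
def modMProj (n m : ℕ) : FreeGrp n →* Multiplicative (Fin n → ZMod m) :=
  FreeGroup.lift fun i => Multiplicative.ofAdd (Pi.single i 1)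

/-- The level `m` congruence subgroup `Aut(Fₙ, m)`: the kernel of the composite
`Aut(Fₙ) → Aut(ℤⁿ) → Aut((ℤ/mℤ)ⁿ)` given by the action on the abelianization of `Fₙ`
reduced modulo `m`; equivalently, the automorphisms `e` with `π ∘ e = π` where
`π : Fₙ → (ℤ/mℤ)ⁿ` is the canonical projection. -/
def AutCongr (n m : ℕ) : Subgroup (AutF n) where
  carrier := {e | ∀ x : FreeGrp n, modMProj n m (e x) = modMProj n m x}
  one_mem' := fun _ => rfl
  mul_mem' := by
    intro a b ha hb x
    have h : (a * b) x = a (b x) := rfl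
    rw [h, ha (b x), hb x]
  inv_mem' := by
    intro a ha x
    have h := ha (a⁻¹ x)
    have h' : a (a⁻¹ x) = x := a.apply_symm_apply x
    rw [h'] at h
    exact h.symm

open Filter Topology Asymptotics in
theorem thurston {Γ : Type*} [Group Γ] (hfg : Group.FG Γ)
    (hab : ∀ φ : Γ →* Multiplicative ℝ, φ = 1) (f : Γ → ℝ → ℝ)
    (f1 : ∀ x, f 1 x = x) (fmul : ∀ g h x, f (g * h) x = f g (f h x))
    (hmono : ∀ g, StrictMono (f g)) (hC : ∀ g, ContDiff ℝ 1 (f g))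
    (hd : ∀ g x, deriv (f g) x ≠ 0)
    (hfix : ∀ y, ∃ x ≤ y, ∀ g, f g x = x) : ∀ g x, f g x = x := by
  by_contra! hcon
  obtain ⟨g0, y, hy⟩ := hcon
  have hcont : ∀ g, Continuous (f g) := fun g => (hC g).continuous
  set W : Set ℝ := {x | x ≤ y ∧ ∀ g, f g x = x} with hW
  have hWne : W.Nonempty := by
    obtain ⟨x, hx, h⟩ := hfix y
    exact ⟨x, hx, h⟩
  have hWb : BddAbove W := ⟨y, fun x hx => hx.1⟩
  have hWc : IsClosed W := by
    have : W = Set.Iic y ∩ ⋂ g, {x | f g x = x} := by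
      ext x; simp [hW]
    rw [this]
    exact isClosed_Iic.inter (isClosed_iInter fun g => isClosed_eq (hcont g) continuous_id)
  set p := sSup W with hp
  have hpW : p ∈ W := hWc.csSup_mem hWne hWb
  have hpy : p < y := lt_of_le_of_ne hpW.1 (by rintro h; exact hy (h ▸ hpW.2 g0))
  have hnot : ∀ x, p < x → x ≤ y → ∃ g, f g x ≠ x := by
    intro x hx hxy
    by_contra! h
    exact absurd (le_csSup hWb (show x ∈ W from ⟨hxy, h⟩)) (not_le.2 hx)
  obtain ⟨S, hS⟩ := (Group.fg_iff').1 hfg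
  obtain ⟨S, hS⟩ := hS
  have hfixgen : ∀ x, (∀ s ∈ S, f s x = x) → ∀ g, f g x = x := by
    intro x hx g
    have hg : g ∈ Subgroup.closure (S : Set Γ) := by rw [hS.2]; trivial
    induction hg using Subgroup.closure_induction with
    | mem s hs => exact hx s hs
    | one => exact f1 x
    | mul a b _ _ ha hb => rw [fmul, hb, ha]
    | inv a _ ha =>
      have : f (a⁻¹ * a) x = x := by rw [inv_mul_cancel, f1]
      rwa [fmul, ha] at this
  -- derivative at p is 1
  have hdiff : ∀ g x, DifferentiableAt ℝ (f g) x := fun g x =>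
    (hC g).differentiable (by norm_num) x
  have hdpos : ∀ g x, 0 < deriv (f g) x := fun g x =>
    lt_of_le_of_ne ((hmono g).monotone.deriv_nonneg) (hd g x).symm
  have hd1 : ∀ g, deriv (f g) p = 1 := by
    let φ : Γ →* Multiplicative ℝ := MonoidHom.mk'
      (fun g => Multiplicative.ofAdd (Real.log (deriv (f g) p))) (by
        intro g h
        have h1 : f (g * h) = f g ∘ f h := by ext x; exact fmul g h x
        rw [h1, deriv_comp p (hdiff _ _) (hdiff _ _), hpW.2 h,
          Real.log_mul (hd _ _) (hd _ _)]
        rfl)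
    intro g
    have h := DFunLike.congr_fun (hab φ) g
    have h2 : Real.log (deriv (f g) p) = 0 := h
    rcases Real.log_eq_zero.1 h2 with h | h | h
    · exact absurd h (hd g p)
    · exact h
    · linarith [hdpos g p]
  set l := 𝓝[>] p with hl
  set M : ℝ → ℝ := fun x => ∑ s ∈ S, |f s x - x| with hM
  have hMpos : ∀ᶠ x in l, 0 < M x := by
    have : Set.Ioc p y ∈ l := Ioc_mem_nhdsGT hpy
    filter_upwards [this] with x hx
    apply lt_of_le_of_ne (Finset.sum_nonneg fun _ _ => abs_nonneg _)
    intro h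
    have h' := (Finset.sum_eq_zero_iff_of_nonneg (fun _ _ => abs_nonneg _)).1 h.symm
    obtain ⟨g, hg⟩ := hnot x hx.1 hx.2
    exact hg (hfixgen x (fun s hs => by
      have := h' s hs
      rw [abs_eq_zero] at this; linarith) g)
  set D : Γ → ℝ → ℝ := fun g x => (f g x - x) / M x with hD
  have key : ∀ g h, (fun x => D (g * h) x - D g x - D h x) =o[l] (D h) := by
    intro g h
    have hs : HasStrictDerivAt (fun x => f g x - x) 0 p := by
      have h1 : HasStrictDerivAt (f g) (deriv (f g) p) p :=
        (hC g).contDiffAt.hasStrictDerivAt (by norm_num)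
      rw [hd1] at h1
      have h2 := h1.sub (hasStrictDerivAt_id p)
      rw [sub_self] at h2
      exact h2
    have ho := hs.hasStrictFDerivAt.isLittleO
    have ht : Tendsto (fun x => (f h x, x)) l (𝓝 (p, p)) := by
      have h1 : Tendsto (f h) l (𝓝 p) := by
        have := (hcont h).tendsto p
        rw [hpW.2 h] at this
        exact this.mono_left nhdsWithin_le_nhds
      exact h1.prodMk_nhds nhdsWithin_le_nhds
    have ho2 := ho.comp_tendsto ht
    have ho3 := ho2.mul_isBigO (isBigO_refl (fun x => (M x)⁻¹) l)
    refine ho3.congr ?_ ?_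
    · intro x
      simp only [Function.comp, hD, fmul]
      simp
      ring
    · intro x
      simp only [Function.comp, hD]
      ring
  have hbdd : ∀ g, D g =O[l] (fun _ => (1:ℝ)) := by
    intro g
    have hg : g ∈ Subgroup.closure (S : Set Γ) := by rw [hS.2]; trivial
    induction hg using Subgroup.closure_induction with
    | mem s hs =>
      refine IsBigO.of_bound 1 ?_
      filter_upwards [hMpos] with x hx
      simp only [hD, norm_div, Real.norm_eq_abs, abs_of_pos hx]
      rw [abs_one, mul_one, div_le_one hx]
      exact Finset.single_le_sum (f := fun s => |f s x - x|) (fun _ _ => abs_nonneg _) hs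
    | one =>
      have : D 1 = fun _ => 0 := by ext x; simp [hD, f1]
      rw [this]; exact isBigO_zero _ _
    | mul a b _ _ ha hb =>
      have h1 := ((key a b).isBigO.trans hb).add (ha.add hb)
      refine h1.congr_left ?_
      intro x; ring
    | inv a _ ha =>
      have h1 := ((key a⁻¹ a).isBigO.trans ha).add ha
      have h2 : D 1 = fun _ => 0 := by ext x; simp [hD, f1]
      rw [inv_mul_cancel, h2] at h1
      refine (h1.neg_left).congr_left ?_
      intro x; ring
  let U : Ultrafilter ℝ := Ultrafilter.of l
  have hU : (U : Filter ℝ) ≤ l := Ultrafilter.of_le l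
  have hlim : ∀ g, ∃ c, Tendsto (D g) U (𝓝 c) := by
    intro g
    obtain ⟨C, hC⟩ := ((hbdd g).mono hU).bound
    have hm : (U.map (D g) : Filter ℝ) ≤ 𝓟 (Set.Icc (-C) C) := by
      rw [Filter.le_principal_iff]
      change _ ∈ Filter.map _ _
      rw [Filter.mem_map]
      filter_upwards [hC] with x hx
      simp only [norm_one, mul_one, Real.norm_eq_abs] at hx
      exact abs_le.1 hx
    obtain ⟨c, -, hc⟩ := isCompact_Icc.ultrafilter_le_nhds _ hm
    exact ⟨c, hc⟩
  choose c hc using hlim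
  have hcm : ∀ g h, c (g * h) = c g + c h := by
    intro g h
    have h1 : Tendsto (fun x => D (g * h) x - D g x - D h x) U (𝓝 0) :=
      (isLittleO_one_iff ℝ).1 (((key g h).trans_isBigO (hbdd h)).mono hU)
    have h2 := ((hc (g * h)).sub (hc g)).sub (hc h)
    have := tendsto_nhds_unique h1 h2
    linarith
  let φ : Γ →* Multiplicative ℝ := MonoidHom.mk'
      (fun g => Multiplicative.ofAdd (c g)) (by intro g h; rw [hcm]; rfl)
  have hc0 : ∀ g, c g = 0 := fun g => DFunLike.congr_fun (hab φ) g
  have hsum : Tendsto (fun x => ∑ s ∈ S, |D s x|) U (𝓝 (∑ s ∈ S, |c s|)) :=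
    tendsto_finsetSum _ fun s _ => (hc s).abs
  have hone : Tendsto (fun x => ∑ s ∈ S, |D s x|) U (𝓝 1) := by
    refine tendsto_const_nhds.congr' ?_
    filter_upwards [hU hMpos] with x hx
    simp only [hD, abs_div, abs_of_pos (show 0 < M x from hx)]
    rw [← Finset.sum_div]
    exact (div_self (ne_of_gt hx)).symm
  have := tendsto_nhds_unique hsum hone
  simp [hc0] at this

abbrev LL := CircleDeg1Liftˣ

namespace LL
open CircleDeg1Lift

/-- translation number of a unit -/
def tn (F : LL) : ℝ := translationNumber (F : CircleDeg1Lift)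

def tr (k : ℤ) : LL := translate (Multiplicative.ofAdd (k : ℝ))

lemma tr_apply (k : ℤ) (x : ℝ) : (tr k) x = x + k := by
  rw [tr, translate_apply, add_comm]

lemma mul_app (F G : LL) (x : ℝ) : (F * G : LL) x = F (G x) := rfl
lemma one_app (x : ℝ) : (1 : LL) x = x := rfl
lemma inv_app (F : LL) (x : ℝ) : (F⁻¹ : LL) (F x) = x := units_inv_apply_apply F x
lemma app_inv (F : LL) (x : ℝ) : F ((F⁻¹ : LL) x) = x := units_apply_inv_apply F x

lemma ext' {F G : LL} (h : ∀ x, F x = G x) : F = G := Units.ext (CircleDeg1Lift.ext h)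

lemma smono (F : LL) : StrictMono F := (toOrderIso F).strictMono
lemma inj (F : LL) {x y : ℝ} (h : F x = F y) : x = y := (smono F).injective h
lemma cont (F : LL) : Continuous F := (toOrderIso F).continuous

lemma tr_add (j k : ℤ) : tr (j + k) = tr j * tr k := by
  apply ext'; intro x; rw [mul_app, tr_apply, tr_apply, tr_apply]; push_cast; ring

lemma tr_zero : tr 0 = 1 := by
  apply ext'; intro x; rw [tr_apply, one_app]; simp

lemma tr_neg (k : ℤ) : tr (-k) = (tr k)⁻¹ := by
  apply eq_inv_of_mul_eq_one_left; rw [← tr_add]; simp [tr_zero]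

lemma tr_comm (k : ℤ) (F : LL) : Commute (tr k) F := by
  apply ext'; intro x; rw [mul_app, mul_app, tr_apply, tr_apply, map_add_int]

lemma tr_pow (k : ℤ) (n : ℕ) : (tr k) ^ n = tr (n * k) := by
  induction n with
  | zero => simp [tr_zero]
  | succ n ih => rw [pow_succ, ih, ← tr_add]; congr 1; push_cast; ring

lemma tn_tr (k : ℤ) : tn (tr k) = k := translationNumber_translate _

lemma tn_conj (F G : LL) : tn (F * G * F⁻¹) = tn G := by
  simpa [tn] using translationNumber_conj_eq F (G : CircleDeg1Lift)

lemma tn_mul {F G : LL} (h : Commute F G) : tn (F * G) = tn F + tn G := by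
  have : Commute (F : CircleDeg1Lift) (G : CircleDeg1Lift) := Units.ext_iff.1 h
  simpa [tn] using translationNumber_mul_of_commute this

lemma tn_pow (F : LL) (n : ℕ) : tn (F ^ n) = n * tn F := by
  simpa [tn] using translationNumber_pow (F : CircleDeg1Lift) n

lemma tn_tr_mul (k : ℤ) (F : LL) : tn (tr k * F) = k + tn F := by
  rw [tn_mul (tr_comm k F), tn_tr]

lemma tn_inv (F : LL) : tn F⁻¹ = - tn F := translationNumber_units_inv F

lemma exists_of_tn_int {F : LL} {k : ℤ} (h : tn F = k) : ∃ x, F x = x + k :=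
  (translationNumber_eq_int_iff _ (cont F)).1 h

lemma displ (F : LL) (x : ℝ) : |F x - x - tn F| ≤ 1 := by
  have h1 := map_lt_add_translationNumber_add_one (F : CircleDeg1Lift) x
  have h2 := map_lt_add_translationNumber_add_one ((F⁻¹ : LL) : CircleDeg1Lift) (F x)
  rw [translationNumber_units_inv] at h2
  rw [units_inv_apply_apply] at h2
  rw [abs_le]; unfold tn
  constructor <;> linarith

/-- a lift of a circle bijection -/
def IsLift (σ : Equiv.Perm 𝕊) (F : LL) : Prop := ∀ x : ℝ, σ (x : 𝕊) = (F x : 𝕊)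

lemma IsLift.one : IsLift 1 1 := fun _ => rfl

lemma IsLift.mul {σ σ' : Equiv.Perm 𝕊} {F G : LL} (h : IsLift σ F) (h' : IsLift σ' G) :
    IsLift (σ * σ') (F * G) := by
  intro x
  rw [Equiv.Perm.mul_apply, h' x, h, mul_app]

lemma IsLift.inv {σ : Equiv.Perm 𝕊} {F : LL} (h : IsLift σ F) : IsLift σ⁻¹ F⁻¹ := by
  intro x
  rw [Equiv.Perm.inv_eq_iff_eq, h, app_inv]

lemma IsLift.pow {σ : Equiv.Perm 𝕊} {F : LL} (h : IsLift σ F) (n : ℕ) :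
    IsLift (σ ^ n) (F ^ n) := by
  induction n with
  | zero => simpa using IsLift.one
  | succ n ih => rw [pow_succ, pow_succ]; exact ih.mul h

lemma coe_eq_iff {x y : ℝ} : (x : 𝕊) = (y : 𝕊) ↔ ∃ k : ℤ, x = y + k := by
  rw [← sub_eq_zero, ← AddCircle.coe_sub, AddCircle.coe_eq_zero_iff]
  constructor
  · rintro ⟨k, hk⟩; refine ⟨k, ?_⟩; simp at hk; linarith
  · rintro ⟨k, hk⟩; refine ⟨k, ?_⟩; simp; linarith

lemma isLift_tr (k : ℤ) : IsLift 1 (tr k) := by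
  intro x
  rw [tr_apply, Equiv.Perm.one_apply, coe_eq_iff]
  exact ⟨-k, by push_cast; ring⟩

lemma eq_tr_of_isLift_one {F : LL} (h : IsLift 1 F) : ∃ k : ℤ, F = tr k := by
  have h1 : ∀ x, ∃ k : ℤ, F x = x + k := fun x => coe_eq_iff.1 (h x).symm
  choose k hk using h1
  refine ⟨k 0, ext' fun x => ?_⟩
  rw [tr_apply]
  have h0 : ∀ y, 0 ≤ y → y < 1 → k y = k 0 := by
    intro y hy hy1
    rcases hy.eq_or_lt with rfl | hy
    · rfl
    have a := smono F hy
    have b := smono F hy1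
    have e1 := map_add_one (F : CircleDeg1Lift) 0
    rw [zero_add] at e1
    rw [e1] at b
    rw [hk 0, hk y] at a b
    have a' : (k 0 : ℝ) < k y + 1 := by linarith
    have b' : (k y : ℝ) < k 0 + 1 := by linarith
    norm_cast at a' b'
    omega
  have h2 := h0 (Int.fract x) (Int.fract_nonneg x) (Int.fract_lt_one x)
  have h3 := hk (Int.fract x)
  rw [h2] at h3
  have h4 : F (Int.fract x + ⌊x⌋) = F (Int.fract x) + ⌊x⌋ := map_add_int _ _ _
  rw [Int.fract_add_floor, h3] at h4
  rw [h4]; linarith [Int.fract_add_floor x]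

lemma IsLift.exists_tr {σ : Equiv.Perm 𝕊} {F G : LL} (h : IsLift σ F) (h' : IsLift σ G) :
    ∃ k : ℤ, F = tr k * G := by
  have := h.mul h'.inv
  rw [mul_inv_cancel] at this
  obtain ⟨k, hk⟩ := eq_tr_of_isLift_one this
  exact ⟨k, by rw [← hk]; group⟩

lemma IsLift.unique {σ : Equiv.Perm 𝕊} {F G : LL} (h : IsLift σ F) (h' : IsLift σ G)
    (ht : tn F = tn G) : F = G := by
  obtain ⟨k, hk⟩ := h.exists_tr h'
  rw [hk, tn_tr_mul] at ht
  have : (k : ℝ) = 0 := by linarith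
  norm_cast at this
  rw [hk, this, tr_zero, one_mul]

lemma IsLift.commute {σ σ' : Equiv.Perm 𝕊} {F G : LL} (h : IsLift σ F) (h' : IsLift σ' G)
    (hc : Commute σ σ') : Commute F G := by
  have h1 := (h.mul h').mul h.inv
  have e : σ * σ' * σ⁻¹ = σ' := by rw [hc.eq, mul_inv_cancel_right]
  rw [e] at h1
  have := h1.unique h' (tn_conj F G)
  rwa [mul_inv_eq_iff_eq_mul] at this

/-- some `e`-th multiple of the rotation number is integral -/
def RatRot (e : ℕ) (σ : Equiv.Perm 𝕊) : Prop := ∃ F, IsLift σ F ∧ ∃ k : ℤ, e * tn F = k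

lemma RatRot.lift {e : ℕ} {σ : Equiv.Perm 𝕊} (h : RatRot e σ) {F : LL} (hF : IsLift σ F) :
    ∃ k : ℤ, e * tn F = k := by
  obtain ⟨G, hG, k, hk⟩ := h
  obtain ⟨j, rfl⟩ := hF.exists_tr hG
  refine ⟨e * j + k, ?_⟩
  rw [tn_tr_mul]; push_cast; rw [← hk]; ring

end LL

namespace LL
open CircleDeg1Lift Filter Topology

/-- the good set property -/
def GoodSet (A : Subgroup LL) (X : Set ℝ) : Prop :=
  X.Nonempty ∧ (∀ a ∈ A, ∀ x ∈ X, a x ∈ X) ∧ ∀ a ∈ A, (∃ y, a y = y) → ∀ x ∈ X, a x = x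

lemma tr_mem {B : Subgroup LL} (h1 : tr 1 ∈ B) (k : ℤ) : tr k ∈ B := by
  have h : ∀ n : ℕ, tr (n : ℤ) ∈ B := by
    intro n
    have := B.pow_mem h1 n
    rw [tr_pow] at this
    simpa using this
  rcases Int.le_total 0 k with hk | hk
  · have := h k.toNat
    rwa [Int.toNat_of_nonneg hk] at this
  · have := B.inv_mem (h (-k).toNat)
    rw [Int.toNat_of_nonneg (by omega), ← tr_neg] at this
    simpa using this

lemma pow_succ_app (F : LL) (n : ℕ) (x : ℝ) : (F ^ (n+1) : LL) x = F ((F ^ n : LL) x) := by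
  rw [pow_succ', mul_app]

lemma fix_of_disjoint (B : Subgroup LL) (h1 : tr 1 ∈ B) (C D : Set ℝ)
    (hC : IsClosed C) (hD : IsClosed D)
    (hCi : ∀ b ∈ B, ∀ x ∈ C, b x ∈ C) (hDi : ∀ b ∈ B, ∀ x ∈ D, b x ∈ D)
    (hdis : Disjoint C D) (c d : ℝ) (hc : c ∈ C) (hd : d ∈ D) (hdc : d < c)
    (hgap : ∀ x ∈ C, x < c → x < d) (F : LL) (hF : F ∈ B) (y : ℝ) (hy : F y = y) :
    F c ≤ c := by
  by_contra! hlt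
  have hfd : c < F d := by
    have h2 : (F⁻¹ : LL) c < c := by
      have := smono F⁻¹ hlt
      rwa [inv_app] at this
    have h3 := hgap _ (hCi _ (B.inv_mem hF) c hc) h2
    have := smono F h3
    rwa [app_inv] at this
  obtain ⟨k, hk⟩ := exists_int_gt (c - y)
  have hyk : F (y + k) = y + k := by rw [map_add_int, hy]
  set u : ℕ → ℝ := fun n => (F ^ n : LL) c with hu
  set v : ℕ → ℝ := fun n => (F ^ n : LL) d with hv
  have hus : ∀ n, u (n+1) = F (u n) := fun n => pow_succ_app F n c
  have hvs : ∀ n, v (n+1) = F (v n) := fun n => pow_succ_app F n d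
  have humono : Monotone u := by
    apply monotone_nat_of_le_succ
    intro n
    have e : u (n+1) = (F ^ n : LL) (F c) := by
      simp only [hu]; rw [pow_succ, mul_app]
    rw [e]; exact (smono (F^n)).monotone hlt.le
  have hub : ∀ n, u n ≤ y + k := by
    intro n
    induction n with
    | zero => simp [hu]; linarith
    | succ n ih => rw [hus, ← hyk]; exact (smono F).monotone ih
  have hbd : BddAbove (Set.range u) := ⟨y + k, by rintro _ ⟨n, rfl⟩; exact hub n⟩
  have hlim : Tendsto u atTop (𝓝 (⨆ n, u n)) := tendsto_atTop_ciSup humono hbd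
  set q := ⨆ n, u n
  have hqC : q ∈ C := hC.mem_of_tendsto hlim (Eventually.of_forall fun n =>
    hCi _ (B.pow_mem hF n) c hc)
  have hlim' : Tendsto (fun n => u (n+1)) atTop (𝓝 q) := hlim.comp (tendsto_add_atTop_nat 1)
  have hvlim : Tendsto (fun n => v (n+1)) atTop (𝓝 q) := by
    refine tendsto_of_tendsto_of_tendsto_of_le_of_le hlim hlim' ?_ ?_
    · intro n
      simp only [hu, hv]; rw [pow_succ, mul_app]
      exact (smono (F^n)).monotone hfd.le
    · intro n
      exact (smono (F^(n+1))).monotone hdc.le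
  have hqD : q ∈ D := hD.mem_of_tendsto hvlim (Eventually.of_forall fun n =>
    hDi _ (B.pow_mem hF (n+1)) d hd)
  exact Set.disjoint_left.1 hdis hqC hqD

theorem dichotomy (A B : Subgroup LL) (hcomm : ∀ a ∈ A, ∀ b ∈ B, Commute a b)
    (h1B : tr 1 ∈ B) : (∃ X, GoodSet A X) ∨ ∃ X, GoodSet B X := by
  by_cases hcase : ∃ C D : Set ℝ, C.Nonempty ∧ D.Nonempty ∧ IsClosed C ∧ IsClosed D ∧
      (∀ b ∈ B, ∀ x ∈ C, b x ∈ C) ∧ (∀ b ∈ B, ∀ x ∈ D, b x ∈ D) ∧ Disjoint C D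
  · right
    obtain ⟨C, D, ⟨c0, hc0⟩, ⟨d, hd⟩, hC, hD, hCi, hDi, hdis⟩ := hcase
    set W := C ∩ Set.Ici d
    have hWne : W.Nonempty := by
      obtain ⟨k, hk⟩ := exists_int_gt (d - c0)
      refine ⟨c0 + k, ?_, ?_⟩
      · rw [← tr_apply]; exact hCi _ (tr_mem h1B k) _ hc0
      · simp only [Set.mem_Ici]; linarith
    have hWb : BddBelow W := ⟨d, fun x hx => hx.2⟩
    have hWc : IsClosed W := hC.inter isClosed_Ici
    set c := sInf W
    have hcW : c ∈ W := hWc.csInf_mem hWne hWb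
    have hdc : d < c := lt_of_le_of_ne hcW.2 (by
      intro h; exact Set.disjoint_left.1 hdis hcW.1 (h ▸ hd))
    have hgap : ∀ x ∈ C, x < c → x < d := by
      intro x hx hxc
      by_contra! h
      exact absurd (csInf_le hWb (show x ∈ W from ⟨hx, h⟩)) (not_le.2 hxc)
    have key : ∀ F ∈ B, (∃ y, F y = y) → F c = c := by
      rintro F hF ⟨y, hy⟩
      apply le_antisymm
      · exact fix_of_disjoint B h1B C D hC hD hCi hDi hdis c d hcW.1 hd hdc hgap F hF y hy
      · have := fix_of_disjoint B h1B C D hC hD hCi hDi hdis c d hcW.1 hd hdc hgap F⁻¹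
          (B.inv_mem hF) y (by nth_rewrite 1 [← hy]; exact inv_app F y)
        have := (smono F).monotone this
        rwa [app_inv] at this
    refine ⟨{x | ∃ b ∈ B, x = b c}, ⟨c, 1, B.one_mem, rfl⟩, ?_, ?_⟩
    · rintro a ha _ ⟨b, hb, rfl⟩
      exact ⟨a * b, B.mul_mem ha hb, rfl⟩
    · rintro a ha ⟨y, hy⟩ _ ⟨b, hb, rfl⟩
      have := key (b⁻¹ * a * b) (B.mul_mem (B.mul_mem (B.inv_mem hb) ha) hb) ⟨(b⁻¹ : LL) y, by
        rw [mul_app, mul_app, app_inv, hy]⟩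
      rw [mul_app, mul_app] at this
      have := congrArg b this
      rwa [app_inv] at this
  · left
    push Not at hcase
    let ι := {C : Set ℝ // C.Nonempty ∧ IsClosed C ∧ ∀ b ∈ B, ∀ x ∈ C, b x ∈ C}
    have : Nonempty ι := ⟨⟨Set.univ, Set.univ_nonempty, isClosed_univ, fun _ _ _ _ => trivial⟩⟩
    have hpt : ∀ C : ι, (C.1 ∩ Set.Icc 0 1).Nonempty := by
      rintro ⟨C, ⟨x, hx⟩, hC, hCi⟩
      refine ⟨x + (-⌊x⌋ : ℤ), ?_, ?_⟩
      · rw [← tr_apply]; exact hCi _ (tr_mem h1B _) _ hx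
      · have h1 := Int.floor_le x
        have h2 := Int.lt_floor_add_one x
        push_cast
        constructor <;> linarith
    have hK : (⋂ C : ι, (C.1 ∩ Set.Icc 0 1)).Nonempty := by
      apply IsCompact.nonempty_iInter_of_directed_nonempty_isCompact_isClosed
      · rintro ⟨C, hCn, hC, hCi⟩ ⟨D, hDn, hD, hDi⟩
        have hne : (C ∩ D).Nonempty := Set.not_disjoint_iff_nonempty_inter.1
          (hcase C D hCn hDn hC hD hCi hDi)
        refine ⟨⟨C ∩ D, hne, hC.inter hD, fun b hb x hx => ⟨hCi b hb x hx.1, hDi b hb x hx.2⟩⟩,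
          ?_, ?_⟩
        · exact Set.inter_subset_inter_left _ Set.inter_subset_left
        · exact Set.inter_subset_inter_left _ Set.inter_subset_right
      · exact hpt
      · intro C; exact isCompact_Icc.inter_left C.2.2.1
      · intro C; exact C.2.2.1.inter isClosed_Icc
    obtain ⟨x0, hx0⟩ := hK
    refine ⟨⋂ C : ι, C.1, ⟨x0, Set.mem_iInter.2 fun C => (Set.mem_iInter.1 hx0 C).1⟩, ?_, ?_⟩
    · intro a ha x hx
      rw [Set.mem_iInter] at hx ⊢
      rintro ⟨C, ⟨z, hz⟩, hC, hCi⟩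
      exact hx ⟨a ⁻¹' C, ⟨(a⁻¹ : LL) z, by simpa [Set.mem_preimage, app_inv] using hz⟩,
        hC.preimage (cont a), by
          intro b hb y hy
          have e : a (b y) = b (a y) := by
            rw [← mul_app, (hcomm a ha b hb).eq, mul_app]
          rw [Set.mem_preimage, e]
          exact hCi b hb _ hy⟩
    · rintro a ha hy x hx
      rw [Set.mem_iInter] at hx
      exact hx ⟨{y | a y = y}, hy, isClosed_eq (cont a) continuous_id, by
        intro b hb y hy
        have e : a (b y) = b (a y) := by
            rw [← mul_app, (hcomm a ha b hb).eq, mul_app]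
        rw [Set.mem_ofPred_eq] at hy ⊢
        rw [e, hy]⟩

lemma lt_or_gt_of_no_fix {F : LL} (h : ¬ ∃ y, F y = y) : (∀ x, x < F x) ∨ ∀ x, F x < x := by
  by_contra! hc
  obtain ⟨⟨x, hx⟩, ⟨y, hy⟩⟩ := hc
  have := intermediate_value_univ₂ (f := F) (g := id) (a := x) (b := y) (cont F) continuous_id
    hx hy
  exact h this

lemma pow_lt_pow_app {F G : LL} (h : ∀ x, F x < G x) (n : ℕ) (x : ℝ) :
    (F ^ (n+1) : LL) x < (G ^ (n+1) : LL) x := by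
  induction n with
  | zero => simpa using h x
  | succ n ih =>
    rw [pow_succ_app F, pow_succ_app G]
    exact (smono F ih).trans (h _)

lemma conj_pow_app (a b : LL) (e : ℕ) : (a * b * a⁻¹) ^ e = a * b ^ e * a⁻¹ := conj_pow

lemma commute_on {A : Subgroup LL} {X : Set ℝ} (hX : GoodSet A X) {e : ℕ} (he : 0 < e)
    {a b : LL} (ha : a ∈ A) (hb : b ∈ A) {k : ℤ} (hk : ∀ x ∈ X, (b ^ e : LL) x = x + k) :
    ∀ x ∈ X, (a * b : LL) x = (b * a : LL) x := by
  obtain ⟨e, rfl⟩ : ∃ e', e = e' + 1 := ⟨e - 1, by omega⟩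
  set c := b⁻¹ * (a * b * a⁻¹) with hc
  have hcA : c ∈ A := A.mul_mem (A.inv_mem hb) (A.mul_mem (A.mul_mem ha hb) (A.inv_mem ha))
  obtain ⟨x0, hx0⟩ := hX.1
  have hconj : ∀ x ∈ X, ((a * b * a⁻¹) ^ (e+1) : LL) x = x + k := by
    intro x hx
    rw [conj_pow_app, mul_app, mul_app, hk _ (hX.2.1 _ (A.inv_mem ha) x hx), map_add_int, app_inv]
  have hbc : ∀ x, (a * b * a⁻¹ : LL) x = b (c x) := by
    intro x; rw [hc, mul_app b⁻¹, app_inv]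
  have hfix : ∃ y, c y = y := by
    by_contra hno
    rcases lt_or_gt_of_no_fix hno with h | h
    · have := pow_lt_pow_app (F := b) (G := a * b * a⁻¹) (fun x => by
        rw [hbc]; exact smono b (h x)) e x0
      rw [hconj x0 hx0, hk x0 hx0] at this
      exact lt_irrefl _ this
    · have := pow_lt_pow_app (G := b) (F := a * b * a⁻¹) (fun x => by
        rw [hbc]; exact smono b (h x)) e x0
      rw [hconj x0 hx0, hk x0 hx0] at this
      exact lt_irrefl _ this
  intro x hx
  have := hX.2.2 c hcA hfix (a x) (hX.2.1 a ha x hx)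
  have h2 := hbc (a x)
  rw [this] at h2
  rw [mul_app b a, ← h2, mul_app, mul_app, mul_app, inv_app]

/-- elements acting on X as e-th roots of integer translations -/
def rootSub (A : Subgroup LL) (X : Set ℝ) (hX : GoodSet A X) (e : ℕ) (he : 0 < e) :
    Subgroup LL where
  carrier := {a | a ∈ A ∧ ∃ k : ℤ, ∀ x ∈ X, (a ^ e : LL) x = x + k}
  one_mem' := ⟨A.one_mem, 0, fun x _ => by simp⟩
  mul_mem' := by
    rintro a b ⟨ha, j, hj⟩ ⟨hb, k, hk⟩
    refine ⟨A.mul_mem ha hb, j + k, ?_⟩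
    have h1 : ∀ n : ℕ, ∀ x ∈ X, (b ^ n * a : LL) x = (a * b ^ n : LL) x := by
      intro n
      induction n with
      | zero => simp
      | succ n ih =>
        intro x hx
        rw [pow_succ', mul_assoc, mul_app, ih x hx, ← mul_app, ← mul_assoc, mul_app,
          ← commute_on hX he ha hb hk _ (hX.2.1 _ (A.pow_mem hb n) x hx), ← mul_app, mul_assoc]
    have h2 : ∀ n : ℕ, ∀ x ∈ X, ((a * b) ^ n : LL) x = (a ^ n * b ^ n : LL) x := by
      intro n
      induction n with
      | zero => simp
      | succ n ih =>
        intro x hx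
        have h3 := h1 n _ (hX.2.1 _ hb x hx)
        rw [mul_app, mul_app] at h3
        rw [pow_succ, mul_app, ih _ (hX.2.1 _ (A.mul_mem ha hb) x hx), mul_app, mul_app, h3]
        simp only [pow_succ, mul_app]
    intro x hx
    rw [h2 e x hx, mul_app, hk x hx, map_add_int, hj x hx]
    push_cast; ring
  inv_mem' := by
    rintro a ⟨ha, k, hk⟩
    refine ⟨A.inv_mem ha, -k, fun x hx => ?_⟩
    apply inj (a ^ e)
    have h1 : a ^ e * a⁻¹ ^ e = 1 := by simp
    rw [← mul_app, h1, map_add_int, hk x hx, one_app]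
    push_cast; ring


/-- all lifts of all elements -/
def liftSub {S : Type*} [Group S] (ρ : S →* Equiv.Perm 𝕊) : Subgroup LL where
  carrier := {F | ∃ s, IsLift (ρ s) F}
  one_mem' := ⟨1, by rw [map_one]; exact IsLift.one⟩
  mul_mem' := by
    rintro a b ⟨s, hs⟩ ⟨t, ht⟩
    exact ⟨s * t, by rw [map_mul]; exact hs.mul ht⟩
  inv_mem' := by
    rintro a ⟨s, hs⟩
    exact ⟨s⁻¹, by rw [map_inv]; exact hs.inv⟩

lemma character_of_goodSet {S : Type*} [Group S] (gens : Set S)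
    (hgen : Subgroup.closure gens = ⊤) (ρ : S →* Equiv.Perm 𝕊)
    (hl : ∀ s, ∃ F, IsLift (ρ s) F) {e : ℕ} (he : 0 < e) (hr : ∀ s ∈ gens, RatRot e (ρ s))
    {X : Set ℝ} (hX : GoodSet (liftSub ρ) X) :
    ∃ (χ : S →* Multiplicative (ZMod e)) (x0 : ℝ), ∀ s, χ s = 1 →
      ∃ F, IsLift (ρ s) F ∧ F x0 = x0 := by
  set A := liftSub ρ with hA
  set R := rootSub A X hX e he with hR
  have htr : ∀ k, tr k ∈ R := fun k => ⟨⟨1, by rw [map_one]; exact isLift_tr k⟩, e * k, by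
    intro x _; rw [tr_pow, tr_apply]⟩
  choose f hf using hl
  have hfA : ∀ s, f s ∈ A := fun s => ⟨s, hf s⟩
  have hmulf : ∀ s t, ∃ k : ℤ, f (s * t) = tr k * (f s * f t) := by
    intro s t
    have := (hf s).mul (hf t)
    rw [← map_mul] at this
    exact (hf (s * t)).exists_tr this
  have hfR : ∀ s, f s ∈ R := by
    intro s
    have hs : s ∈ Subgroup.closure gens := by rw [hgen]; trivial
    induction hs using Subgroup.closure_induction with
    | mem s hs =>
      obtain ⟨k, hk⟩ := (hr s hs).lift (hf s)
      refine ⟨hfA s, k, ?_⟩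
      rw [← tn_pow] at hk
      obtain ⟨y, hy⟩ := exists_of_tn_int hk
      intro x hx
      have := hX.2.2 (tr (-k) * f s ^ e) (A.mul_mem (htr _).1 (A.pow_mem (hfA s) e)) ⟨y, by
        rw [mul_app, hy, tr_apply]; push_cast; ring⟩ x hx
      rw [mul_app, tr_apply] at this
      rw [Int.cast_neg] at this; linarith
    | one =>
      have := hf 1
      rw [map_one] at this
      obtain ⟨k, hk⟩ := eq_tr_of_isLift_one this
      rw [hk]; exact htr k
    | mul a b _ _ ha hb =>
      obtain ⟨k, hk⟩ := hmulf a b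
      rw [hk]; exact R.mul_mem (htr k) (R.mul_mem ha hb)
    | inv a _ ha =>
      have h1 := (hf a).inv
      rw [← map_inv] at h1
      obtain ⟨k, hk⟩ := (hf a⁻¹).exists_tr h1
      rw [hk]; exact R.mul_mem (htr k) (R.inv_mem ha)
  obtain ⟨x0, hx0⟩ := hX.1
  choose P hP using fun s => (hfR s).2
  have hPm : ∀ s t, ∃ k : ℤ, P (s * t) = P s + P t + e * k := by
    intro s t
    obtain ⟨k, hk⟩ := hmulf s t
    refine ⟨k, ?_⟩
    have h1 := hP (s * t) x0 hx0
    have h2 : ((f s * f t) ^ e : LL) x0 = (f s ^ e * f t ^ e : LL) x0 := by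
      -- both computed through commutation on X
      have hc : ∀ x ∈ X, (f s * f t : LL) x = (f t * f s : LL) x :=
        commute_on hX he (hfA s) (hfA t) (hP t)
      have g1 : ∀ n : ℕ, ∀ x ∈ X, (f t ^ n * f s : LL) x = (f s * f t ^ n : LL) x := by
        intro n
        induction n with
        | zero => simp
        | succ n ih =>
          intro x hx
          rw [pow_succ', mul_assoc, mul_app, ih x hx, ← mul_app, ← mul_assoc, mul_app,
            ← hc _ (hX.2.1 _ (A.pow_mem (hfA t) n) x hx), ← mul_app, mul_assoc]
      have g2 : ∀ n : ℕ, ∀ x ∈ X, ((f s * f t) ^ n : LL) x = (f s ^ n * f t ^ n : LL) x := by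
        intro n
        induction n with
        | zero => simp
        | succ n ih =>
          intro x hx
          have h3 := g1 n _ (hX.2.1 _ (hfA t) x hx)
          rw [mul_app, mul_app] at h3
          rw [pow_succ, mul_app, ih _ (hX.2.1 _ (A.mul_mem (hfA s) (hfA t)) x hx), mul_app,
            mul_app, h3]
          simp only [pow_succ, mul_app]
      exact g2 e x0 hx0
    rw [hk, (tr_comm k _).mul_pow, mul_app, h2, mul_app, hP t x0 hx0, map_add_int, hP s x0 hx0,
      tr_pow, tr_apply] at h1
    have h3 : ((P (s * t) : ℤ) : ℝ) = ((P s + P t + e * k : ℤ) : ℝ) := by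
      push_cast at h1 ⊢; linarith
    exact_mod_cast h3
  refine ⟨MonoidHom.mk' (fun s => Multiplicative.ofAdd ((P s : ℤ) : ZMod e)) ?_, x0, ?_⟩
  · intro s t
    obtain ⟨k, hk⟩ := hPm s t
    rw [hk, ← ofAdd_add]
    simp
  · intro s hs
    have h1 : ((P s : ℤ) : ZMod e) = 0 := hs
    rw [ZMod.intCast_zmod_eq_zero_iff_dvd] at h1
    obtain ⟨k, hk⟩ := h1
    refine ⟨tr (-k) * f s, by simpa using (isLift_tr (-k)).mul (hf s), ?_⟩
    have h2 : ((tr (-k) * f s) ^ e : LL) x0 = x0 := by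
      rw [(tr_comm _ _).mul_pow, mul_app, hP s x0 hx0, tr_pow, tr_apply, hk]
      push_cast; ring
    have h3 : tn ((tr (-k) * f s) ^ e) = ((0 : ℤ) : ℝ) :=
      translationNumber_of_eq_add_int _ (x := x0) (by rw [h2]; simp)
    rw [tn_pow] at h3
    have h4 : tn (tr (-k) * f s) = ((0 : ℤ) : ℝ) := by
      have : (e : ℝ) ≠ 0 := by positivity
      simpa [this] using h3
    obtain ⟨y, hy⟩ := exists_of_tn_int h4
    exact hX.2.2 _ (A.mul_mem (htr _).1 (hfA s)) ⟨y, by simpa using hy⟩ x0 hx0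

theorem dichotomy_action {S : Type*} [Group S] (gens : Set S)
    (hgen : Subgroup.closure gens = ⊤) (ρ₁ ρ₂ : S →* Equiv.Perm 𝕊)
    (hl₁ : ∀ s, ∃ F, IsLift (ρ₁ s) F) (hl₂ : ∀ s, ∃ F, IsLift (ρ₂ s) F)
    (hc : ∀ s t, Commute (ρ₁ s) (ρ₂ t)) {e : ℕ} (he : 0 < e)
    (hr₁ : ∀ s ∈ gens, RatRot e (ρ₁ s)) (hr₂ : ∀ s ∈ gens, RatRot e (ρ₂ s)) :
    ∃ (χ : S →* Multiplicative (ZMod e)) (x0 : ℝ),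
      (∀ s, χ s = 1 → ∃ F, IsLift (ρ₁ s) F ∧ F x0 = x0) ∨
      (∀ s, χ s = 1 → ∃ F, IsLift (ρ₂ s) F ∧ F x0 = x0) := by
  rcases dichotomy (liftSub ρ₁) (liftSub ρ₂) (by
    rintro a ⟨s, hs⟩ b ⟨t, ht⟩
    exact hs.commute ht (hc s t)) ⟨1, by rw [map_one]; exact isLift_tr 1⟩ with ⟨X, hX⟩ | ⟨X, hX⟩
  · obtain ⟨χ, x0, h⟩ := character_of_goodSet gens hgen ρ₁ hl₁ he hr₁ hX
    exact ⟨χ, x0, Or.inl h⟩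
  · obtain ⟨χ, x0, h⟩ := character_of_goodSet gens hgen ρ₂ hl₂ he hr₂ hX
    exact ⟨χ, x0, Or.inr h⟩

end LL

/-- ordered product `T 1 * T 2 * ... * T n` -/
def pr {G : Type*} [Group G] (T : ℕ → G) : ℕ → G
  | 0 => 1
  | n + 1 => pr T n * T (n + 1)

lemma pr_map {G H : Type*} [Group G] [Group H] (f : G →* H) (T : ℕ → G) (n : ℕ) :
    f (pr T n) = pr (fun i => f (T i)) n := by
  induction n with
  | zero => simp [pr]
  | succ n ih => simp [pr, ih]

lemma pr_telescope {G : Type*} [Group G] (T : ℕ → G) (k n : ℕ) :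
    pr (fun i => pr T i * T i ^ k * (pr T i)⁻¹) n * pr T n = pr (fun i => T i ^ (k + 1)) n := by
  induction n with
  | zero => simp [pr]
  | succ n ih =>
    simp only [pr]
    rw [← ih, pow_succ']
    group

lemma pr_conj {G : Type*} [Group G] (b : G) (T : ℕ → G) (n : ℕ) :
    b * pr T n * b⁻¹ = pr (fun i => b * T i * b⁻¹) n := by
  have := pr_map (MulAut.conj b).toMonoidHom T n
  simpa using this

namespace LL

lemma isLift_pr {σ : ℕ → Equiv.Perm 𝕊} {F : ℕ → LL} (h : ∀ i, IsLift (σ i) (F i)) (n : ℕ) :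
    IsLift (pr σ n) (pr F n) := by
  induction n with
  | zero => exact IsLift.one
  | succ n ih => exact ih.mul (h _)

lemma pr_displ {F : ℕ → LL} {t : ℝ} (h : ∀ i, tn (F i) = t) (n : ℕ) (x : ℝ) :
    |(pr F n : LL) x - x - n * t| ≤ n := by
  induction n generalizing x with
  | zero => simp [pr]
  | succ n ih =>
    have h1 := ih (F (n+1) x)
    have h2 := displ (F (n+1)) x
    rw [h] at h2
    rw [abs_le] at *
    simp only [pr, mul_app]
    push_cast
    constructor <;> linarith [h1.1, h1.2, h2.1, h2.2]

theorem ratRot_of_relations {G : Type*} [Group G] (ρ : G →* Equiv.Perm 𝕊)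
    (hl : ∀ g, ∃ F, IsLift (ρ g) F) (T c b a : G) (m : ℕ)
    (h1 : ∀ i, b * (c ^ i * T * (c ^ i)⁻¹) * b⁻¹ =
      pr (fun i => c ^ i * T * (c ^ i)⁻¹) i * (c ^ i * T * (c ^ i)⁻¹) *
        (pr (fun i => c ^ i * T * (c ^ i)⁻¹) i)⁻¹)
    (h2 : b * a * b⁻¹ = pr (fun i => c ^ i * T * (c ^ i)⁻¹) m * a) : RatRot m (ρ T) := by
  obtain ⟨T', hT⟩ := hl T
  obtain ⟨c', hc⟩ := hl c
  obtain ⟨b', hb⟩ := hl b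
  obtain ⟨a', ha⟩ := hl a
  refine ⟨T', hT, ?_⟩
  set Q : ℕ → G := fun i => c ^ i * T * (c ^ i)⁻¹ with hQ
  set U : ℕ → LL := fun i => c' ^ i * T' * (c' ^ i)⁻¹ with hU
  have hUt : ∀ i, tn (U i) = tn T' := fun i => tn_conj _ _
  have hQU : ∀ i, IsLift (ρ (Q i)) (U i) := by
    intro i
    simp only [hQ, hU, map_mul, map_inv, map_pow]
    exact ((hc.pow i).mul hT).mul (hc.pow i).inv
  have hPP : ∀ i, IsLift (ρ (pr Q i)) (pr U i) := by
    intro i; rw [pr_map]; exact isLift_pr hQU i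
  have e1 : ∀ i, b' * U i * b'⁻¹ = pr U i * U i * (pr U i)⁻¹ := by
    intro i
    have l1 := (hb.mul (hQU i)).mul hb.inv
    have l2 := ((hPP i).mul (hQU i)).mul (hPP i).inv
    have : ρ b * ρ (Q i) * (ρ b)⁻¹ = ρ (pr Q i) * ρ (Q i) * (ρ (pr Q i))⁻¹ := by
      have := congrArg ρ (show b * Q i * b⁻¹ = pr Q i * Q i * (pr Q i)⁻¹ from h1 i)
      simpa only [map_mul, map_inv] using this
    rw [this] at l1
    exact l1.unique l2 (by rw [tn_conj b' (U i), tn_conj (pr U i) (U i)])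
  obtain ⟨n, e2⟩ : ∃ n : ℤ, b' * a' * b'⁻¹ = tr n * (pr U m * a') := by
    have l1 := (hb.mul ha).mul hb.inv
    have l2 := (hPP m).mul ha
    have : ρ b * ρ a * (ρ b)⁻¹ = ρ (pr Q m) * ρ a := by
      have := congrArg ρ h2
      simpa only [map_mul, map_inv] using this
    rw [this] at l1
    exact l1.exists_tr l2
  have e3 : ∀ k : ℕ, b' ^ k * a' * (b' ^ k)⁻¹ = tr (k * n) * (pr (fun i => U i ^ k) m * a') := by
    intro k
    induction k with
    | zero =>
      have : ∀ j : ℕ, pr (fun _ => (1 : LL)) j = 1 := by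
        intro j
        induction j with
        | zero => rfl
        | succ j ih => simp [pr, ih]
      simp [tr_zero, this]
    | succ k ih =>
      have s1 : b' ^ (k+1) * a' * (b' ^ (k+1))⁻¹ = b' * (b' ^ k * a' * (b' ^ k)⁻¹) * b'⁻¹ := by
        rw [pow_succ']; group
      have s2 : b' * pr (fun i => U i ^ k) m * b'⁻¹ =
          pr (fun i => pr U i * U i ^ k * (pr U i)⁻¹) m := by
        rw [pr_conj]
        congr 1
        ext1 i
        rw [← conj_pow, e1, conj_pow]
      have s3 : b' * (tr (k * n) * (pr (fun i => U i ^ k) m * a')) * b'⁻¹ =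
          tr (k * n) * ((b' * pr (fun i => U i ^ k) m * b'⁻¹) * (b' * a' * b'⁻¹)) := by
        have := (tr_comm (k * n) b').eq
        calc _ = (b' * tr (k * n)) * (pr (fun i => U i ^ k) m * a') * b'⁻¹ := by group
          _ = _ := by rw [← this]; group
      rw [s1, ih, s3, s2, e2, ← pr_telescope]
      have t1 : ((k + 1 : ℕ) : ℤ) * n = k * n + n := by push_cast; ring
      rw [t1, tr_add]
      have := (tr_comm n (pr (fun i => pr U i * U i ^ k * (pr U i)⁻¹) m)).eq
      calc _ = tr (k * n) * (pr (fun i => pr U i * U i ^ k * (pr U i)⁻¹) m * tr n) *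
              (pr U m * a') := by group
        _ = _ := by rw [← this]; group
  have e4 : ∀ k : ℕ, |(k : ℝ) * (m * tn T' + n)| ≤ m + 2 + 2 * |tn a'| := by
    intro k
    have d1 := displ (b' ^ k * a' * (b' ^ k)⁻¹) 0
    rw [tn_conj, e3 k, mul_app, tr_apply, mul_app] at d1
    have d2 := displ a' 0
    have d3 := pr_displ (F := fun i => U i ^ k) (t := k * tn T')
      (fun i => by rw [tn_pow, hUt]) m (a' 0)
    have d4 := neg_abs_le (tn a')
    have d5 := le_abs_self (tn a')
    push_cast at d1
    rw [abs_le] at d1 d2 d3 ⊢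
    have : (k : ℝ) * (m * tn T' + n) = m * (k * tn T') + k * n := by ring
    rw [this]
    constructor <;> linarith [d1.1, d1.2, d2.1, d2.2, d3.1, d3.2]
  refine ⟨-n, ?_⟩
  by_contra hne
  have hpos : 0 < |m * tn T' + n| := by
    rw [abs_pos]; intro h; apply hne; push_cast; linarith
  obtain ⟨k, hk⟩ := exists_nat_gt ((m + 2 + 2 * |tn a'|) / |m * tn T' + n|)
  rw [div_lt_iff₀ hpos] at hk
  have := e4 k
  rw [abs_mul, Nat.abs_cast] at this
  linarith

/-- if `κ ^ m` is a product of two commuting elements with `m`-rational rotation,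
then `κ` has `m * m`-rational rotation. -/
theorem ratRot_sq {G : Type*} [Group G] (ρ : G →* Equiv.Perm 𝕊)
    (hl : ∀ g, ∃ F, IsLift (ρ g) F) {κ r l : G} {m : ℕ} (hc : Commute r l)
    (h : κ ^ m = r * l) (hr : RatRot m (ρ r)) (hL : RatRot m (ρ l)) :
    RatRot (m * m) (ρ κ) := by
  obtain ⟨K, hK⟩ := hl κ
  obtain ⟨R, hR, i, hi⟩ := hr
  obtain ⟨L, hLL, j, hj⟩ := hL
  have h1 := hK.pow m
  rw [← map_pow, h, map_mul] at h1
  obtain ⟨k, hk⟩ := h1.exists_tr (hR.mul hLL)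
  have h2 : tn (K ^ m) = k + (tn R + tn L) := by
    rw [hk, tn_tr_mul, tn_mul]
    exact hR.commute hLL (hc.map ρ)
  rw [tn_pow] at h2
  refine ⟨K, hK, m * k + (i + j), ?_⟩
  push_cast
  rw [mul_assoc, h2, ← hi, ← hj]; ring

lemma RatRot.mul_left {e : ℕ} {σ : Equiv.Perm 𝕊} (h : RatRot e σ) (d : ℕ) :
    RatRot (d * e) σ := by
  obtain ⟨F, hF, k, hk⟩ := h
  exact ⟨F, hF, d * k, by push_cast; rw [mul_assoc, hk]⟩

end LL

namespace FA
open FreeGroup (of lift)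

variable {ι : Type*} [DecidableEq ι]

lemma mulAut_ext {f g : MulAut (FreeGroup ι)} (h : ∀ i, f (of i) = g (of i)) : f = g := by
  have : f.toMonoidHom = g.toMonoidHom := FreeGroup.ext_hom _ _ h
  ext x
  exact DFunLike.congr_fun this x

/-- kill the letter `z` -/
def pz (z : ι) : FreeGroup ι →* FreeGroup ι := lift (fun i => if i = z then 1 else of i)

@[simp] lemma pz_self (z : ι) : pz z (of z) = 1 := by simp [pz]
lemma pz_ne {z i : ι} (h : i ≠ z) : pz z (of i) = of i := by simp [pz, h]

@[simp] lemma pz_pz (z : ι) (w : FreeGroup ι) : pz z (pz z w) = pz z w := by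
  have : (pz z).comp (pz z) = pz z := by
    apply FreeGroup.ext_hom; intro i
    by_cases h : i = z
    · subst h; simp
    · simp [pz_ne h]
  exact DFunLike.congr_fun this w

def Rend (z : ι) (w : FreeGroup ι) : FreeGroup ι →* FreeGroup ι :=
  lift (fun i => if i = z then of z * pz z w else of i)

def Lend (z : ι) (w : FreeGroup ι) : FreeGroup ι →* FreeGroup ι :=
  lift (fun i => if i = z then (pz z w)⁻¹ * of z else of i)

lemma Rend_self (z : ι) (w : FreeGroup ι) : Rend z w (of z) = of z * pz z w := by simp [Rend]
lemma Rend_ne {z i : ι} (h : i ≠ z) (w : FreeGroup ι) : Rend z w (of i) = of i := by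
  simp [Rend, h]
lemma Lend_self (z : ι) (w : FreeGroup ι) : Lend z w (of z) = (pz z w)⁻¹ * of z := by
  simp [Lend]
lemma Lend_ne {z i : ι} (h : i ≠ z) (w : FreeGroup ι) : Lend z w (of i) = of i := by
  simp [Lend, h]

lemma Rend_pz (z : ι) (w v : FreeGroup ι) : Rend z w (pz z v) = pz z v := by
  have : (Rend z w).comp (pz z) = pz z := by
    apply FreeGroup.ext_hom; intro i
    by_cases h : i = z
    · subst h; simp
    · simp [pz_ne h, Rend_ne h]
  exact DFunLike.congr_fun this v

lemma Lend_pz (z : ι) (w v : FreeGroup ι) : Lend z w (pz z v) = pz z v := by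
  have : (Lend z w).comp (pz z) = pz z := by
    apply FreeGroup.ext_hom; intro i
    by_cases h : i = z
    · subst h; simp
    · simp [pz_ne h, Lend_ne h]
  exact DFunLike.congr_fun this v

lemma Rend_mul (z : ι) (w v : FreeGroup ι) : (Rend z w).comp (Rend z v) = Rend z (w * v) := by
  apply FreeGroup.ext_hom; intro i
  by_cases h : i = z
  · subst h; simp [Rend_self, Rend_pz, mul_assoc]
  · simp [Rend_ne h]

lemma Lend_mul (z : ι) (w v : FreeGroup ι) : (Lend z w).comp (Lend z v) = Lend z (w * v) := by
  apply FreeGroup.ext_hom; intro i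
  by_cases h : i = z
  · subst h; simp [Lend_self, Lend_pz, mul_assoc]
  · simp [Lend_ne h]

lemma Rend_one (z : ι) : Rend z (1 : FreeGroup ι) = MonoidHom.id _ := by
  apply FreeGroup.ext_hom; intro i
  by_cases h : i = z
  · subst h; simp [Rend_self]
  · simp [Rend_ne h]

lemma Lend_one (z : ι) : Lend z (1 : FreeGroup ι) = MonoidHom.id _ := by
  apply FreeGroup.ext_hom; intro i
  by_cases h : i = z
  · subst h; simp [Lend_self]
  · simp [Lend_ne h]

/-- `x_z ↦ x_z w` -/
def R (z : ι) : FreeGroup ι →* MulAut (FreeGroup ι) where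
  toFun w := MonoidHom.toMulEquiv (Rend z w) (Rend z w⁻¹)
    (by rw [Rend_mul, inv_mul_cancel, Rend_one]) (by rw [Rend_mul, mul_inv_cancel, Rend_one])
  map_one' := by
    ext x; exact DFunLike.congr_fun (Rend_one z) x
  map_mul' w v := by
    ext x; exact (DFunLike.congr_fun (Rend_mul z w v) x).symm

/-- `x_z ↦ w⁻¹ x_z` -/
def L (z : ι) : FreeGroup ι →* MulAut (FreeGroup ι) where
  toFun w := MonoidHom.toMulEquiv (Lend z w) (Lend z w⁻¹)
    (by rw [Lend_mul, inv_mul_cancel, Lend_one]) (by rw [Lend_mul, mul_inv_cancel, Lend_one])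
  map_one' := by
    ext x; exact DFunLike.congr_fun (Lend_one z) x
  map_mul' w v := by
    ext x; exact (DFunLike.congr_fun (Lend_mul z w v) x).symm

lemma R_self (z : ι) (w : FreeGroup ι) : R z w (of z) = of z * pz z w := Rend_self z w
lemma R_ne {z i : ι} (h : i ≠ z) (w : FreeGroup ι) : R z w (of i) = of i := Rend_ne h w
lemma L_self (z : ι) (w : FreeGroup ι) : L z w (of z) = (pz z w)⁻¹ * of z := Lend_self z w
lemma L_ne {z i : ι} (h : i ≠ z) (w : FreeGroup ι) : L z w (of i) = of i := Lend_ne h w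
lemma R_pz (z : ι) (w v : FreeGroup ι) : R z w (pz z v) = pz z v := Rend_pz z w v
lemma L_pz (z : ι) (w v : FreeGroup ι) : L z w (pz z v) = pz z v := Lend_pz z w v

lemma R_fix {z : ι} {v : FreeGroup ι} (h : pz z v = v) (w : FreeGroup ι) : R z w v = v := by
  rw [← h]; exact R_pz z w v
lemma L_fix {z : ι} {v : FreeGroup ι} (h : pz z v = v) (w : FreeGroup ι) : L z w v = v := by
  rw [← h]; exact L_pz z w v

lemma R_p (z : ι) (w : FreeGroup ι) : R z (pz z w) = R z w := by
  apply mulAut_ext; intro i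
  by_cases h : i = z
  · subst h; simp [R_self]
  · simp [R_ne h]

lemma L_p (z : ι) (w : FreeGroup ι) : L z (pz z w) = L z w := by
  apply mulAut_ext; intro i
  by_cases h : i = z
  · subst h; simp [L_self]
  · simp [L_ne h]

lemma conj_R {θ : MulAut (FreeGroup ι)} {z : ι} (hz : θ (of z) = of z)
    (hp : ∀ w, pz z (θ w) = θ (pz z w)) (w : FreeGroup ι) :
    θ * R z w * θ⁻¹ = R z (θ w) := by
  rw [mul_inv_eq_iff_eq_mul]
  apply mulAut_ext; intro i
  rw [MulAut.mul_apply, MulAut.mul_apply]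
  by_cases h : i = z
  · subst h; rw [R_self, map_mul, hz, R_self, hp]
  · rw [R_ne h, ← pz_ne h, ← hp, R_pz]

lemma conj_L {θ : MulAut (FreeGroup ι)} {z : ι} (hz : θ (of z) = of z)
    (hp : ∀ w, pz z (θ w) = θ (pz z w)) (w : FreeGroup ι) :
    θ * L z w * θ⁻¹ = L z (θ w) := by
  rw [mul_inv_eq_iff_eq_mul]
  apply mulAut_ext; intro i
  rw [MulAut.mul_apply, MulAut.mul_apply]
  by_cases h : i = z
  · subst h; rw [L_self, map_mul, map_inv, hz, L_self, hp]
  · rw [L_ne h, ← pz_ne h, ← hp, L_pz]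

lemma RL_comm (z : ι) (w v : FreeGroup ι) : Commute (R z w) (L z v) := by
  apply mulAut_ext; intro i
  rw [MulAut.mul_apply, MulAut.mul_apply]
  by_cases h : i = z
  · subst h; rw [R_self, L_self, map_mul, map_mul, map_inv, R_self, L_self, R_pz, L_pz, mul_assoc]
  · rw [R_ne h, L_ne h, R_ne h]

/-- `R j u` commutes with `pz z` when `j ≠ z` and `u` avoids `z`. -/
lemma pz_R {z j : ι} (h : z ≠ j) {u : FreeGroup ι} (hu : pz z u = u) (w : FreeGroup ι) :
    pz z (R j u w) = R j u (pz z w) := by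
  have hpp : pz z (pz j u) = pz j u := by
    have : (pz z).comp (pz j) = (pz j).comp (pz z) := by
      apply FreeGroup.ext_hom; intro i
      by_cases h1 : i = z
      · subst h1; simp [pz_ne h]
      · by_cases h2 : i = j
        · subst h2; simp [pz_ne h1]
        · simp [pz_ne h1, pz_ne h2]
    have := DFunLike.congr_fun this u
    simpa [hu] using this
  have : (pz z).comp (R j u).toMonoidHom = (R j u).toMonoidHom.comp (pz z) := by
    apply FreeGroup.ext_hom; intro i
    by_cases h1 : i = z
    · subst h1; simp [R_ne h]
    · by_cases h2 : i = j
      · subst h2; simp [R_self, pz_ne h1, hpp]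
      · simp [R_ne h2, pz_ne h1]
  exact DFunLike.congr_fun this w

lemma pz_L {z j : ι} (h : z ≠ j) {u : FreeGroup ι} (hu : pz z u = u) (w : FreeGroup ι) :
    pz z (L j u w) = L j u (pz z w) := by
  have hpp : pz z (pz j u) = pz j u := by
    have : (pz z).comp (pz j) = (pz j).comp (pz z) := by
      apply FreeGroup.ext_hom; intro i
      by_cases h1 : i = z
      · subst h1; simp [pz_ne h]
      · by_cases h2 : i = j
        · subst h2; simp [pz_ne h1]
        · simp [pz_ne h1, pz_ne h2]
    have := DFunLike.congr_fun this u
    simpa [hu] using this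
  have : (pz z).comp (L j u).toMonoidHom = (L j u).toMonoidHom.comp (pz z) := by
    apply FreeGroup.ext_hom; intro i
    by_cases h1 : i = z
    · subst h1; simp [L_ne h]
    · by_cases h2 : i = j
      · subst h2; simp [L_self, pz_ne h1, hpp]
      · simp [L_ne h2, pz_ne h1]
  exact DFunLike.congr_fun this w

lemma R_conj_R {z j : ι} (h : z ≠ j) {u : FreeGroup ι} (hu : pz z u = u) (w : FreeGroup ι) :
    R j u * R z w * (R j u)⁻¹ = R z (R j u w) :=
  conj_R (R_ne h u) (pz_R h hu) w

lemma R_conj_L {z j : ι} (h : z ≠ j) {u : FreeGroup ι} (hu : pz z u = u) (w : FreeGroup ι) :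
    R j u * L z w * (R j u)⁻¹ = L z (R j u w) :=
  conj_L (R_ne h u) (pz_R h hu) w

lemma L_conj_R {z j : ι} (h : z ≠ j) {u : FreeGroup ι} (hu : pz z u = u) (w : FreeGroup ι) :
    L j u * R z w * (L j u)⁻¹ = R z (L j u w) :=
  conj_R (L_ne h u) (pz_L h hu) w

lemma RR_comm {z j : ι} (h : z ≠ j) {u w : FreeGroup ι} (hu : pz z u = u) (hw : pz j w = w) :
    Commute (R j u) (R z w) := by
  have := R_conj_R h hu w
  rw [R_fix hw] at this
  exact mul_inv_eq_iff_eq_mul.1 this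

lemma LR_comm {z j : ι} (h : z ≠ j) {u w : FreeGroup ι} (hu : pz z u = u) (hw : pz j w = w) :
    Commute (L j u) (R z w) := by
  have := L_conj_R h hu w
  rw [L_fix hw] at this
  exact mul_inv_eq_iff_eq_mul.1 this

/-- `x_z ↦ g⁻¹ x_z g` -/
def kap (z : ι) : FreeGroup ι →* MulAut (FreeGroup ι) := MonoidHom.mk'
  (fun g => R z g * L z g) (by
    intro g h
    rw [map_mul, map_mul, mul_assoc, mul_assoc, ← mul_assoc (R z h), (RL_comm z h g).eq,
      mul_assoc])

lemma kap_def (z : ι) (g : FreeGroup ι) : kap z g = R z g * L z g := rfl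

lemma kap_ne {z i : ι} (h : i ≠ z) (w : FreeGroup ι) : kap z w (of i) = of i := by
  rw [kap_def, MulAut.mul_apply, L_ne h, R_ne h]

lemma kap_self (z : ι) (w : FreeGroup ι) : kap z w (of z) = (pz z w)⁻¹ * of z * pz z w := by
  rw [kap_def, MulAut.mul_apply, L_self, map_mul, map_inv, R_pz, R_self, mul_assoc]

lemma kap_pz (z : ι) (w v : FreeGroup ι) : kap z w (pz z v) = pz z v := by
  rw [kap_def, MulAut.mul_apply, L_pz, R_pz]

/-- fix `x_z`, conjugate all other letters by `g` -/
def cz (z : ι) : FreeGroup ι →* MulAut (FreeGroup ι) := MonoidHom.mk'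
  (fun g => MulAut.conj (pz z g) * kap z g) (by
    intro g h
    have e : MulAut.conj (pz z h) * kap z g = kap z g * MulAut.conj (pz z h) := by
      ext x
      simp only [MulAut.mul_apply, MulAut.conj_apply, map_mul, map_inv, kap_pz]
    rw [map_mul, map_mul, map_mul, mul_assoc, mul_assoc, ← mul_assoc _ (kap z g), e, mul_assoc])

lemma cz_def (z : ι) (g : FreeGroup ι) : cz z g = MulAut.conj (pz z g) * kap z g := rfl

lemma cz_self (z : ι) (g : FreeGroup ι) : cz z g (of z) = of z := by
  rw [cz_def, MulAut.mul_apply, kap_self, MulAut.conj_apply]; group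

lemma cz_ne {z i : ι} (h : i ≠ z) (g : FreeGroup ι) :
    cz z g (of i) = pz z g * of i * (pz z g)⁻¹ := by
  rw [cz_def, MulAut.mul_apply, kap_ne h, MulAut.conj_apply]

lemma cz_pz (z : ι) (g v : FreeGroup ι) : cz z g (pz z v) = pz z g * pz z v * (pz z g)⁻¹ := by
  rw [cz_def, MulAut.mul_apply, kap_pz, MulAut.conj_apply]

lemma pz_cz (z : ι) (g v : FreeGroup ι) : pz z (cz z g v) = cz z g (pz z v) := by
  have : (pz z).comp (cz z g).toMonoidHom = (cz z g).toMonoidHom.comp (pz z) := by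
    apply FreeGroup.ext_hom; intro i
    by_cases h : i = z
    · subst h; simp [cz_self]
    · simp [cz_ne h, pz_ne h]
  exact DFunLike.congr_fun this v

lemma cz_conj_R (z : ι) (g w : FreeGroup ι) :
    cz z g * R z w * (cz z g)⁻¹ = R z (g * w * g⁻¹) := by
  rw [conj_R (cz_self z g) (pz_cz z g), ← R_p, pz_cz, cz_pz, ← map_inv, ← map_mul, ← map_mul, R_p]

lemma cz_conj_L (z : ι) (g w : FreeGroup ι) :
    cz z g * L z w * (cz z g)⁻¹ = L z (g * w * g⁻¹) := by
  rw [conj_L (cz_self z g) (pz_cz z g), ← L_p, pz_cz, cz_pz, ← map_inv, ← map_mul, ← map_mul, L_p]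

/-- commutator of two letters -/
def cm (i j : ι) : FreeGroup ι := of i * of j * (of i)⁻¹ * (of j)⁻¹

lemma pz_cm {z i j : ι} (hi : i ≠ z) (hj : j ≠ z) : pz z (cm i j) = cm i j := by
  simp [cm, pz_ne hi, pz_ne hj]

lemma pz_pow {z i : ι} (hi : i ≠ z) (n : ℕ) : pz z (of i ^ n) = of i ^ n := by
  simp [pz_ne hi]

lemma pz_zpow {z i : ι} (hi : i ≠ z) (n : ℤ) : pz z (of i ^ n) = of i ^ n := by
  simp [pz_ne hi]

/-- permuting letters -/
def Pm (π : Equiv.Perm ι) : MulAut (FreeGroup ι) := FreeGroup.freeGroupCongr π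

lemma Pm_of (π : Equiv.Perm ι) (i : ι) : Pm π (of i) = of (π i) := by
  simp [Pm]

lemma Pm_conj_R (π : Equiv.Perm ι) (z : ι) (w : FreeGroup ι) :
    Pm π * R z w * (Pm π)⁻¹ = R (π z) (Pm π w) := by
  have hp : ∀ v, pz (π z) (Pm π v) = Pm π (pz z v) := by
    intro v
    have : (pz (π z)).comp (Pm π).toMonoidHom = (Pm π).toMonoidHom.comp (pz z) := by
      apply FreeGroup.ext_hom; intro i
      by_cases h : i = z
      · subst h; simp [Pm_of]
      · have h' : π i ≠ π z := fun e => h (π.injective e)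
        simp [Pm_of, pz_ne h, pz_ne h']
    exact DFunLike.congr_fun this v
  rw [mul_inv_eq_iff_eq_mul]
  apply mulAut_ext; intro i
  rw [MulAut.mul_apply, MulAut.mul_apply, Pm_of]
  by_cases h : i = z
  · subst h; rw [R_self, R_self, map_mul, Pm_of, hp]
  · have h' : π i ≠ π z := fun e => h (π.injective e)
    rw [R_ne h, R_ne h', Pm_of]

end FA

lemma mem_zpowers_of_orderOf_dvd {C : Type*} [CommGroup C] [IsCyclic C] [Finite C] {a b : C}
    (h : orderOf b ∣ orderOf a) : b ∈ Subgroup.zpowers a := by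
  classical
  have := Fintype.ofFinite C
  have h1 := IsCyclic.card_pow_eq_one_le (α := C) (n := orderOf a) (orderOf_pos a)
  by_contra hb
  have hsub : insert b (Finset.univ.filter (fun x : C => x ∈ Subgroup.zpowers a)) ⊆
      Finset.univ.filter (fun x : C => x ^ orderOf a = 1) := by
    intro x hx
    rw [Finset.mem_insert] at hx
    rw [Finset.mem_filter]
    refine ⟨Finset.mem_univ _, ?_⟩
    rcases hx with rfl | hx
    · exact orderOf_dvd_iff_pow_eq_one.1 h
    · rw [Finset.mem_filter] at hx
      exact orderOf_dvd_iff_pow_eq_one.1 (orderOf_dvd_of_mem_zpowers hx.2)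
  have h2 := Finset.card_le_card hsub
  rw [Finset.card_insert_of_notMem (by simpa using hb)] at h2
  have h3 : (Finset.univ.filter (fun x : C => x ∈ Subgroup.zpowers a)).card = orderOf a := by
    rw [← Nat.card_zpowers, Nat.card_eq_fintype_card, Fintype.card_subtype]
  omega

lemma mem_zpowers_of_max {C : Type*} [CommGroup C] [IsCyclic C] [Finite C] {a b : C}
    (h : ∀ s : ℕ, orderOf (a * b ^ s) ≤ orderOf a) : b ∈ Subgroup.zpowers a := by
  apply mem_zpowers_of_orderOf_dvd
  have ha0 : orderOf a ≠ 0 := (orderOf_pos a).ne'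
  have hb0 : orderOf b ≠ 0 := (orderOf_pos b).ne'
  by_contra hnd
  rw [← Nat.factorization_prime_le_iff_dvd hb0 ha0] at hnd
  push Not at hnd
  obtain ⟨p, hp, hlt⟩ := hnd
  obtain ⟨w, q, hq, hA⟩ := Nat.exists_eq_pow_mul_and_not_dvd ha0 p hp.ne_one
  obtain ⟨v, q', hq', hB⟩ := Nat.exists_eq_pow_mul_and_not_dvd hb0 p hp.ne_one
  have hf : ∀ k r : ℕ, ¬ p ∣ r → (p ^ k * r).factorization p = k := by
    intro k r hr
    have hr0 : r ≠ 0 := by rintro rfl; simp at hr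
    rw [Nat.factorization_mul (pow_ne_zero _ hp.ne_zero) hr0]
    simp [hp.factorization_self, Nat.factorization_eq_zero_of_not_dvd hr]
  rw [hA, hB, hf _ _ hq, hf _ _ hq'] at hlt
  have hq0 : 0 < q := Nat.pos_of_ne_zero (by rintro rfl; simp at hq)
  have hq'0 : 0 < q' := Nat.pos_of_ne_zero (by rintro rfl; simp at hq')
  have key : p ^ v * q ∣ orderOf (a * b ^ q') := by
    set n := orderOf (a * b ^ q') with hn
    have hn0 : n ≠ 0 := (orderOf_pos _).ne'
    have hpow : (a * b ^ q') ^ n = 1 := pow_orderOf_eq_one _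
    apply Nat.Coprime.mul_dvd_of_dvd_of_dvd
    · exact Nat.Coprime.pow_left _ ((Nat.Prime.coprime_iff_not_dvd hp).2 hq)
    · by_contra hc
      obtain ⟨u, q'', hq'', hN⟩ := Nat.exists_eq_pow_mul_and_not_dvd hn0 p hp.ne_one
      have huv : u + 1 ≤ v := by
        by_contra huv
        exact hc (hN ▸ Dvd.dvd.mul_right (pow_dvd_pow p (by omega)) _)
      have h1 : (a * b ^ q') ^ (p ^ (v-1) * q'' * q) = 1 := by
        apply orderOf_dvd_iff_pow_eq_one.1
        rw [← hn, hN]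
        exact Dvd.dvd.mul_right (Nat.mul_dvd_mul_right (pow_dvd_pow p (by omega)) _) _
      rw [mul_pow, (orderOf_dvd_iff_pow_eq_one (x := a)).1, one_mul, ← pow_mul,
        ← orderOf_dvd_iff_pow_eq_one, hB] at h1
      · have h2 : p ^ v * q' ∣ (p ^ (v-1) * q'' * q) * q' := by
          rwa [mul_comm q' (p ^ (v-1) * q'' * q)] at h1
        have h3 := Nat.dvd_of_mul_dvd_mul_right hq'0 h2
        have h4 : p ^ v = p ^ (v-1) * p := by rw [← pow_succ]; congr 1; omega
        rw [h4, mul_assoc] at h3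
        have h5 := Nat.dvd_of_mul_dvd_mul_left (pow_pos hp.pos _) h3
        rcases hp.dvd_mul.1 h5 with h | h
        · exact hq'' h
        · exact hq h
      · rw [hA, mul_assoc]
        exact Nat.mul_dvd_mul (pow_dvd_pow p (by omega)) (Dvd.intro_left _ rfl)
    · have h1 : a ^ (n * p ^ v) = 1 := by
        have : (a * b ^ q') ^ (n * p ^ v) = 1 := by rw [pow_mul, hpow, one_pow]
        rw [mul_pow, ← pow_mul b, (orderOf_dvd_iff_pow_eq_one (x := b)).1, mul_one] at this
        · exact this
        · rw [hB]; exact ⟨n, by ring⟩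
      rw [← orderOf_dvd_iff_pow_eq_one, hA] at h1
      have h2 : q ∣ n * p ^ v := (Dvd.intro_left _ rfl).trans h1
      exact (Nat.Coprime.pow_right _ ((Nat.Prime.coprime_iff_not_dvd hp).2 hq).symm).dvd_of_dvd_mul_right h2
  have h1 := Nat.le_of_dvd (orderOf_pos _) key
  have h2 := h q'
  have h3 : p ^ w * q < p ^ v * q := Nat.mul_lt_mul_of_pos_right (Nat.pow_lt_pow_right hp.one_lt hlt) hq0
  omega

namespace KT
variable {H C : Type*} [Group H] [CommGroup C]

def IsV (X : H →* C) (φ : H → ℝ) : Prop := ∀ x y, X x = 1 → X y = 1 → φ (x * y) = φ x + φ y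
def ac (h : H) (φ : H → ℝ) : H → ℝ := fun x => φ (h * x * h⁻¹)
def DD (y : H) (φ : H → ℝ) : H → ℝ := fun x => φ (y * x * y⁻¹) - φ x
def cc (t : H) (φ : H → ℝ) (h : H) : ℝ := φ (t * h * t⁻¹ * h⁻¹)

variable {X : H →* C} {φ ψ : H → ℝ}

lemma X_conj (h x : H) : X (h * x * h⁻¹) = X x := by
  rw [map_mul, map_mul, map_inv, mul_comm (X h), mul_inv_cancel_right]
lemma X_com (h x : H) : X (h * x * h⁻¹ * x⁻¹) = 1 := by
  rw [map_mul, X_conj, map_inv, mul_inv_cancel]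

lemma IsV.ac (hφ : IsV X φ) (h : H) : IsV X (ac h φ) := by
  intro x y hx hy
  simp only [KT.ac]
  rw [← hφ _ _ (by rw [X_conj, hx]) (by rw [X_conj, hy])]; congr 1; group

lemma IsV.D (hφ : IsV X φ) (h : H) : IsV X (DD h φ) := by
  intro x y hx hy
  have := hφ.ac h x y hx hy
  simp only [KT.ac] at this
  simp only [DD, this, hφ x y hx hy]; ring

lemma IsV.Dn (hφ : IsV X φ) (h : H) (n : ℕ) : IsV X ((DD h)^[n] φ) := by
  induction n with
  | zero => exact hφ
  | succ n ih => rw [Function.iterate_succ_apply']; exact ih.D h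

lemma IsV.one (hφ : IsV X φ) : φ 1 = 0 := by
  have := hφ 1 1 (map_one X) (map_one X); simp at this; exact this

lemma IsV.inv (hφ : IsV X φ) {x : H} (hx : X x = 1) : φ x⁻¹ = - φ x := by
  have := hφ x x⁻¹ hx (by rw [map_inv, hx, inv_one])
  rw [mul_inv_cancel, hφ.one] at this; linarith

lemma IsV.kconj (hφ : IsV X φ) {k x : H} (hk : X k = 1) (hx : X x = 1) :
    φ (k * x * k⁻¹) = φ x := by
  rw [hφ _ _ (by rw [map_mul, hk, hx, one_mul]) (by rw [map_inv, hk, inv_one]), hφ _ _ hk hx,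
    hφ.inv hk]; ring

lemma IsV.congr (hφ : IsV X φ) {h h' x : H} (hh : X h = X h') (hx : X x = 1) :
    φ (h * x * h⁻¹) = φ (h' * x * h'⁻¹) := by
  have := hφ.kconj (k := h * h'⁻¹) (x := h' * x * h'⁻¹) (by rw [map_mul, map_inv, hh, mul_inv_cancel])
    (by rw [X_conj, hx])
  rw [← this]; congr 1; group

lemma cc_mul (hφ : IsV X φ) (t h h' : H) : cc t φ (h * h') = cc t φ h + cc t (ac h φ) h' := by
  unfold cc ac
  rw [← hφ _ _ (X_com _ _) (by rw [X_conj, X_com])]; congr 1; group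

lemma ac_Dn (hφ : IsV X φ) (y h : H) (n : ℕ) {x : H} (hx : X x = 1) :
    ac h ((DD y)^[n] φ) x = (DD y)^[n] (ac h φ) x := by
  induction n generalizing x with
  | zero => rfl
  | succ n ih =>
    rw [Function.iterate_succ_apply', Function.iterate_succ_apply']
    rw [DD, ← ih hx, ← ih (by rw [X_conj, hx])]
    simp only [ac, DD]
    congr 1
    have := (hφ.Dn y n).congr (h := y * h) (h' := h * y) (x := x) (by rw [map_mul, map_mul, mul_comm]) hx
    convert this using 2 <;> group

def P (X : H →* C) (y t h : H) (j : ℕ) : Prop := ∀ φ, IsV X φ → cc t ((DD y)^[j] φ) h = 0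

variable {y t : H}

lemma P.succ {h : H} {j : ℕ} (hp : P X y t h j) : P X y t h (j+1) := by
  intro φ hφ
  rw [Function.iterate_succ_apply]
  exact hp _ (hφ.D y)

lemma P_zero {h : H} (hc : Commute h t) : P X y t h 0 := by
  intro φ hφ
  simp only [Function.iterate_zero, id, cc]
  rw [← hc.eq, mul_inv_cancel_right, mul_inv_cancel, hφ.one]

lemma cc_ac_Dn (hφ : IsV X φ) (h z : H) (n : ℕ) :
    cc t (ac h ((DD y)^[n] φ)) z = cc t ((DD y)^[n] (ac h φ)) z :=
  ac_Dn hφ y h n (X_com _ _)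

lemma P.next {h z : H} {j : ℕ} (hp : P X y t z j) (hz : X z = X y ∨ X z = (X y)⁻¹)
    (hc : Commute h z) : P X y t h (j+1) := by
  have key : ∀ φ, IsV X φ → cc t (ac z ((DD y)^[j] φ)) h = cc t ((DD y)^[j] φ) h := by
    intro φ hφ
    have h1 := cc_mul (hφ.Dn y j) t h z
    have h2 := cc_mul (hφ.Dn y j) t z h
    rw [hc.eq, h2, hp φ hφ, cc_ac_Dn hφ h z, hp _ (hφ.ac h)] at h1
    linarith
  intro φ hφ
  rw [Function.iterate_succ_apply']
  have hV := hφ.Dn y j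
  have goal' : cc t ((DD y) ((DD y)^[j] φ)) h =
      cc t (ac y ((DD y)^[j] φ)) h - cc t ((DD y)^[j] φ) h := rfl
  rw [goal']
  rcases hz with hz | hz
  · rw [← key φ hφ, sub_eq_zero]
    exact hV.congr hz.symm (X_com _ _)
  · rw [cc_ac_Dn hφ, ← key _ (hφ.ac y), sub_eq_zero]
    have h1 := ac_Dn hφ y y j (x := z * (t * h * t⁻¹ * h⁻¹) * z⁻¹) (by rw [X_conj, X_com])
    have h2 := hV.congr (h := y * z) (h' := 1) (x := t * h * t⁻¹ * h⁻¹)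
      (by rw [map_mul, hz, map_one, mul_inv_cancel]) (X_com _ _)
    show (DD y)^[j] (ac y φ) (z * (t * h * t⁻¹ * h⁻¹) * z⁻¹) = _
    rw [← h1]
    unfold ac cc
    rw [one_mul, inv_one, mul_one] at h2
    rw [← h2]; congr 1; group

lemma P_all {G : Set H} (hG : Subgroup.closure G = ⊤) {j : ℕ} (hP : ∀ g ∈ G, P X y t g j) (h : H) :
    P X y t h j := by
  have hm : h ∈ Subgroup.closure G := by rw [hG]; trivial
  induction hm using Subgroup.closure_induction with
  | mem x hx => exact hP x hx
  | one => intro φ hφ; simp [cc, (hφ.Dn y j).one]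
  | mul a b _ _ ha hb =>
    intro φ hφ
    rw [cc_mul (hφ.Dn y j), ha φ hφ, cc_ac_Dn hφ, hb _ (hφ.ac a), add_zero]
  | inv a _ ha =>
    intro φ hφ
    have := cc_mul (hφ.Dn y j) t a⁻¹ a
    rw [cc_ac_Dn hφ, ha _ (hφ.ac _), inv_mul_cancel, add_zero] at this
    rw [← this]; simp [cc, (hφ.Dn y j).one]

lemma D_of_DD {e : ℕ} (he : 0 < e) (hC : X y ^ e = 1) (hψ : IsV X ψ)
    (h : ∀ x, X x = 1 → DD y (DD y ψ) x = 0) : ∀ x, X x = 1 → DD y ψ x = 0 := by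
  have key : ∀ n : ℕ, ∀ x, X x = 1 → ψ (y ^ n * x * (y ^ n)⁻¹) = ψ x + n * DD y ψ x := by
    intro n
    induction n with
    | zero => intro x hx; simp
    | succ n ih =>
      intro x hx
      have h1 := ih (y * x * y⁻¹) (by rw [X_conj, hx])
      have h2 := h x hx
      have h3 : y ^ n * (y * x * y⁻¹) * (y ^ n)⁻¹ = y ^ (n+1) * x * (y ^ (n+1))⁻¹ := by
        rw [pow_succ]; group
      rw [h3] at h1
      rw [h1]
      have h4 : DD y ψ (y * x * y⁻¹) = DD y ψ x := by
        have : DD y (DD y ψ) x = DD y ψ (y * x * y⁻¹) - DD y ψ x := rfl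
        linarith
      have h5 : DD y ψ x = ψ (y * x * y⁻¹) - ψ x := rfl
      rw [h4]; push_cast; linarith
  intro x hx
  have h1 := key e x hx
  rw [hψ.kconj (by rw [map_pow, hC]) hx] at h1
  have : (e : ℝ) ≠ 0 := by positivity
  have h2 : (e : ℝ) * DD y ψ x = 0 := by linarith
  exact (mul_eq_zero.1 h2).resolve_left this

theorem main {e : ℕ} (he : 0 < e) (hC : ∀ c : C, c ^ e = 1) (ht : X t = (X y)⁻¹)
    (hr : ∀ h, X h ∈ Subgroup.zpowers (X y))
    (hH : ∀ f : H →* Multiplicative ℝ, f = 1)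
    {G : Set H} (hG : Subgroup.closure G = ⊤) (hP : ∀ g ∈ G, P X y t g 2) :
    ∀ f : X.ker →* Multiplicative ℝ, f = 1 := by
  classical
  have inv1 : ∀ φ, IsV X φ → ∀ x, X x = 1 → DD y φ x = 0 := by
    intro φ hφ
    have h3 : ∀ x, X x = 1 → DD y ((DD y)^[2] φ) x = 0 := by
      intro x hx
      have hV := hφ.Dn y 2
      have h0 := P_all hG hP (y * x * y⁻¹) φ hφ
      have hx' : X (y * x * y⁻¹) = 1 := by rw [X_conj, hx]
      unfold cc at h0
      rw [hV _ _ (by rw [X_conj, hx']) (by rw [map_inv, hx', inv_one]), hV.inv hx'] at h0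
      have h4 := hV.congr (h := t * y) (h' := 1) (x := x) (by rw [map_mul, ht, map_one, inv_mul_cancel]) hx
      have h5 : t * (y * x * y⁻¹) * t⁻¹ = t * y * x * (t * y)⁻¹ := by group
      rw [h5, h4] at h0
      simp only [one_mul, inv_one, mul_one] at h0
      unfold DD at h0 ⊢
      linarith
    exact D_of_DD he (hC _) hφ (D_of_DD he (hC _) (hφ.D y) h3)
  have inv2 : ∀ φ, IsV X φ → ∀ h x, X x = 1 → φ (h * x * h⁻¹) = φ x := by
    intro φ hφ h x hx
    let S : Subgroup H := {
      carrier := {h | ∀ x, X x = 1 → φ (h * x * h⁻¹) = φ x}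
      one_mem' := by intro x _; simp
      mul_mem' := by
        intro a b ha hb x hx
        have := ha (b * x * b⁻¹) (by rw [X_conj, hx])
        rw [hb x hx] at this
        rw [← this]; congr 1; group
      inv_mem' := by
        intro a ha x hx
        have := ha (a⁻¹ * x * a⁻¹⁻¹) (by rw [X_conj, hx])
        rw [← this]; congr 1; group }
    have hy : y ∈ S := by
      intro x hx
      have := inv1 φ hφ x hx
      unfold DD at this; linarith
    obtain ⟨k, hk⟩ := Subgroup.mem_zpowers_iff.1 (hr h)
    have h1 := hφ.congr (h := h) (h' := y ^ k) (x := x) (by rw [map_zpow, hk]) hx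
    rw [h1]
    exact S.zpow_mem hy k x hx
  intro f
  let φ : H → ℝ := fun h => if hh : X h = 1 then (f ⟨h, hh⟩).toAdd else 0
  have hφd : ∀ x (hx : X x = 1), φ x = (f ⟨x, hx⟩).toAdd := fun x hx => dif_pos hx
  have hφ : IsV X φ := by
    intro x z hx hz
    rw [hφd x hx, hφd z hz, hφd (x*z) (by rw [map_mul, hx, hz, one_mul]), ← toAdd_mul, ← map_mul f]
    rfl
  have hinv := inv2 φ hφ
  have hcom : ∀ h h', φ (h * h' * h⁻¹ * h'⁻¹) = 0 := by
    intro h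
    let F : H →* Multiplicative ℝ := MonoidHom.mk' (fun h' => Multiplicative.ofAdd (φ (h * h' * h⁻¹ * h'⁻¹))) (by
      intro a b
      rw [← ofAdd_add]; congr 1
      rw [← hinv a (h * b * h⁻¹ * b⁻¹) (X_com _ _), ← hφ _ _ (X_com _ _) (by rw [X_conj, X_com])]
      congr 1; group)
    intro h'
    have := DFunLike.congr_fun (hH F) h'
    exact this
  let N : Subgroup H := {
    carrier := {x | X x = 1 ∧ φ x = 0}
    one_mem' := ⟨map_one X, hφ.one⟩
    mul_mem' := by
      rintro a b ⟨ha, ha'⟩ ⟨hb, hb'⟩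
      exact ⟨by rw [map_mul, ha, hb, one_mul], by rw [hφ _ _ ha hb, ha', hb', add_zero]⟩
    inv_mem' := by
      rintro a ⟨ha, ha'⟩
      exact ⟨by rw [map_inv, ha, inv_one], by rw [hφ.inv ha, ha', neg_zero]⟩ }
  have hN : N.Normal := ⟨by
    rintro n ⟨h1, h2⟩ g
    exact ⟨by rw [X_conj, h1], by rw [hinv g n h1, h2]⟩⟩
  have hpow : ∀ a b : H, φ ((a * b) ^ e) = φ (a ^ e) + φ (b ^ e) := by
    intro a b
    have hXe : ∀ a : H, X (a ^ e) = 1 := fun a => by rw [map_pow, hC]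
    have hc : Commute (QuotientGroup.mk a : H ⧸ N) (QuotientGroup.mk b) := by
      have h1 : b⁻¹ * a⁻¹ * b * a = (b⁻¹ * a⁻¹ * b⁻¹⁻¹ * a⁻¹⁻¹) := by group
      have : (QuotientGroup.mk (a * b) : H ⧸ N) = QuotientGroup.mk (b * a) := by
        rw [QuotientGroup.eq]
        have h1 : (a * b)⁻¹ * (b * a) = (b⁻¹ * a⁻¹ * b⁻¹⁻¹ * a⁻¹⁻¹) := by group
        rw [h1]
        exact ⟨X_com _ _, hcom _ _⟩
      exact this
    have h2 := hc.mul_pow e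
    have h3 : (QuotientGroup.mk (a ^ e * b ^ e) : H ⧸ N) = QuotientGroup.mk ((a * b) ^ e) := h2.symm
    rw [QuotientGroup.eq] at h3
    have h4 := h3.2
    rw [hφ _ _ (by rw [map_inv, map_mul, hXe, hXe, one_mul, inv_one]) (hXe _),
      hφ.inv (by rw [map_mul, hXe, hXe, one_mul]), hφ _ _ (hXe _) (hXe _)] at h4
    linarith
  let F : H →* Multiplicative ℝ := MonoidHom.mk' (fun h => Multiplicative.ofAdd (φ (h ^ e))) (by
    intro a b
    rw [← ofAdd_add, hpow])
  have hF : ∀ h, φ (h ^ e) = 0 := fun h => DFunLike.congr_fun (hH F) h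
  ext ⟨x, hx⟩
  have hx' : X x = 1 := hx
  have h1 := hF x
  rw [hφd _ (by rw [map_pow, hC])] at h1
  have h2 : (⟨x ^ e, by rw [MonoidHom.mem_ker, map_pow, hC]⟩ : X.ker) = ⟨x, hx⟩ ^ e := rfl
  rw [h2, map_pow, toAdd_pow] at h1
  have : (e : ℝ) ≠ 0 := by positivity
  have h3 : (f ⟨x, hx⟩).toAdd = 0 := by
    rw [nsmul_eq_mul] at h1
    exact (mul_eq_zero.1 h1).resolve_left this
  exact h3

end KT

namespace FA
open FreeGroup (of lift)

abbrev F4 : Type := FreeGroup (Fin 4)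

lemma fourth : ∀ a b c : Fin 4, ∃ d : Fin 4, d ≠ a ∧ d ≠ b ∧ d ≠ c := by decide

def Kgen (N : ℕ) : Set F4 := {w | (∃ i, w = of i ^ N) ∨ ∃ i j, w = cm i j}

/-- normal closure of `N`-th powers of letters and commutators -/
def KK (N : ℕ) : Subgroup F4 := Subgroup.normalClosure (Kgen N)

instance (N : ℕ) : (KK N).Normal := Subgroup.normalClosure_normal

lemma pow_mem_KK (N : ℕ) (i : Fin 4) : (of i ^ N : F4) ∈ KK N :=
  Subgroup.subset_normalClosure (Or.inl ⟨i, rfl⟩)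
lemma cm_mem_KK (N : ℕ) (i j : Fin 4) : (cm i j : F4) ∈ KK N :=
  Subgroup.subset_normalClosure (Or.inr ⟨i, j, rfl⟩)

lemma R_mul_inv_mem {N : ℕ} {u : F4} {j : Fin 4} (hu : pz j u ∈ KK N) (v : F4) :
    R j u v * v⁻¹ ∈ KK N := by
  have : (QuotientGroup.mk' (KK N)).comp (R j u).toMonoidHom = QuotientGroup.mk' (KK N) := by
    apply FreeGroup.ext_hom; intro i
    by_cases h : i = j
    · subst h
      have : (QuotientGroup.mk' (KK N)) (pz i u) = 1 := (QuotientGroup.eq_one_iff _).2 hu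
      simp only [MonoidHom.comp_apply, MulEquiv.toMonoidHom_eq_coe, MonoidHom.coe_coe, R_self,
        map_mul, this, mul_one]
    · simp [R_ne h]
  have h2 : QuotientGroup.mk' (KK N) (R j u v) = QuotientGroup.mk' (KK N) v := DFunLike.congr_fun this v
  rw [← QuotientGroup.eq_one_iff]
  have : ((R j u v * v⁻¹ : F4) : F4 ⧸ KK N) = QuotientGroup.mk' (KK N) (R j u v) * (QuotientGroup.mk' (KK N) v)⁻¹ := rfl
  rw [this, h2, mul_inv_cancel]

lemma KK_le_of {N : ℕ} {f : F4 →* F4} {P : Subgroup F4} [P.Normal]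
    (h : ∀ w ∈ Kgen N, f w ∈ P) {k : F4} (hk : k ∈ KK N) : f k ∈ P := by
  have : KK N ≤ P.comap f := Subgroup.normalClosure_le_normal (fun w hw => h w hw)
  exact this hk

lemma pz_mem_KK {N : ℕ} (z : Fin 4) {k : F4} (hk : k ∈ KK N) : pz z k ∈ KK N := by
  apply KK_le_of _ hk
  rintro w (⟨i, rfl⟩ | ⟨i, j, rfl⟩)
  · by_cases h : i = z
    · subst h; rw [map_pow, pz_self, one_pow]; exact one_mem _
    · rw [pz_pow h]; exact pow_mem_KK N i
  · by_cases hi : i = z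
    · subst hi; simp [cm]
    · by_cases hj : j = z
      · subst hj; simp [cm]
      · rw [pz_cm hi hj]; exact cm_mem_KK N i j

lemma R_mem_KK {N : ℕ} {u : F4} (hu : u ∈ KK N) (j : Fin 4) {k : F4} (hk : k ∈ KK N) :
    R j u k ∈ KK N := by
  have := mul_mem (R_mul_inv_mem (pz_mem_KK j hu) k) hk
  simpa using this

structure FZ (N : ℕ) (z : Fin 4) (f : F4 → ℝ) : Prop where
  add : ∀ x ∈ KK N, ∀ y ∈ KK N, f (x * y) = f x + f y
  p : ∀ k ∈ KK N, f (pz z k) = f k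
  r : ∀ j, j ≠ z → ∀ u ∈ KK N, pz z u = u → ∀ k ∈ KK N, f (R j u k) = f k

namespace FZ
variable {N : ℕ} {z : Fin 4} {f : F4 → ℝ}

lemma one (hf : FZ N z f) : f 1 = 0 := by
  have := hf.add 1 (one_mem _) 1 (one_mem _); simp at this; exact this

lemma inv (hf : FZ N z f) {k : F4} (hk : k ∈ KK N) : f k⁻¹ = - f k := by
  have := hf.add k hk k⁻¹ (inv_mem hk); rw [mul_inv_cancel, hf.one] at this; linarith

lemma kconj (hf : FZ N z f) {h k : F4} (hh : h ∈ KK N) (hk : k ∈ KK N) :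
    f (h * k * h⁻¹) = f k := by
  rw [hf.add _ (mul_mem hh hk) _ (inv_mem hh), hf.add _ hh _ hk, hf.inv hh]; ring

lemma nc {k : F4} (h : F4) (hk : k ∈ KK N) : h * k * h⁻¹ ∈ KK N :=
  Subgroup.Normal.conj_mem inferInstance k hk h

lemma conj (hf : FZ N z f) (h : F4) : FZ N z (fun k => f (h * k * h⁻¹)) where
  add := by
    intro x hx y hy
    show f _ = f _ + f _
    rw [← hf.add _ (nc h hx) _ (nc h hy)]; congr 1; group
  p := by
    intro k hk
    show f _ = f _
    rw [← hf.p _ (nc h hk), ← hf.p _ (nc h (pz_mem_KK z hk))]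
    simp
  r := by
    intro j hj u hu hz k hk
    show f _ = f _
    rw [← hf.r j hj u hu hz _ (nc h hk), map_mul, map_mul, map_inv]
    rw [← hf.kconj (R_mul_inv_mem (pz_mem_KK j hu) h) (nc h (R_mem_KK hu j hk))]
    congr 1; group

lemma star (hf : FZ N z f) {u : F4} (hu : u ∈ KK N) {i j : Fin 4} (huz : pz z u = u)
    (huj : pz j u = u) (hij : i ≠ j) (hjz : j ≠ z) :
    f (of i * u * (of i)⁻¹) = f u := by
  have h1 := (hf.conj (of j)⁻¹).r j hjz u hu huz _ (cm_mem_KK N j i)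
  have h2 : (u * of i * u⁻¹ * (of i)⁻¹ : F4) ∈ KK N := by
    have := mul_mem hu (nc (of i) (inv_mem hu))
    convert this using 1; group
  have h3 : R j u (cm j i) = of j * (u * of i * u⁻¹ * (of i)⁻¹) * (of j)⁻¹ * cm j i := by
    simp only [cm, map_mul, map_inv, R_self, R_ne hij, huj]; group
  rw [h3, (hf.conj (of j)⁻¹).add _ (nc _ h2) _ (cm_mem_KK N j i)] at h1
  have h4 : f ((of j)⁻¹ * (of j * (u * of i * u⁻¹ * (of i)⁻¹) * (of j)⁻¹) * ((of j)⁻¹)⁻¹) = 0 := by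
    linarith
  have h5 : (of j)⁻¹ * (of j * (u * of i * u⁻¹ * (of i)⁻¹) * (of j)⁻¹) * ((of j)⁻¹)⁻¹ =
    u * (of i * u * (of i)⁻¹)⁻¹ := by group
  rw [h5, hf.add _ hu _ (inv_mem (nc _ hu)), hf.inv (nc _ hu)] at h4
  linarith

lemma star_pow (hf : FZ N z f) {u : F4} (hu : u ∈ KK N) {i j : Fin 4} (huz : pz z u = u)
    (huj : pz j u = u) (hij : i ≠ j) (hjz : j ≠ z) (n : ℕ) :
    f (of i ^ n * u * (of i ^ n)⁻¹) = f u := by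
  induction n with
  | zero => simp
  | succ n ih =>
    have := (hf.conj (of i ^ n)).star hu huz huj hij hjz
    rw [ih] at this
    rw [← this]; congr 1; rw [pow_succ]; group

lemma pow_zero' (hN : 0 < N) (hf : FZ N z f) (b : Fin 4) : f (of b ^ N) = 0 := by
  by_cases hb : b = z
  · subst hb
    rw [← hf.p _ (pow_mem_KK N b), map_pow, pz_self, one_pow, hf.one]
  obtain ⟨a, haz, hab, -⟩ := fourth z b b
  obtain ⟨j, hjz, hjb, hja⟩ := fourth z b a
  set u : F4 := of b ^ N with hu'
  have hu : u ∈ KK N := pow_mem_KK N b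
  have huz : pz z u = u := pz_pow hb N
  have huj : pz j u = u := pz_pow hjb.symm N
  have hua : pz a u = u := pz_pow hab.symm N
  have key : ∀ n : ℕ, (of a * u) ^ n * (of a ^ n)⁻¹ ∈ KK N ∧
      f ((of a * u) ^ n * (of a ^ n)⁻¹) = n * f u := by
    intro n
    induction n with
    | zero => simp [hf.one]
    | succ n ih =>
      have e1 : (of a * u) ^ (n+1) * (of a ^ (n+1))⁻¹ =
        ((of a * u) ^ n * (of a ^ n)⁻¹) * (of a ^ (n+1) * u * (of a ^ (n+1))⁻¹) := by
        rw [pow_succ, pow_succ (of a)]; group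
      rw [e1]
      refine ⟨mul_mem ih.1 (nc _ hu), ?_⟩
      rw [hf.add _ ih.1 _ (nc _ hu), ih.2, hf.star_pow hu huz huj hja.symm hjz]
      push_cast; ring
  have h1 := hf.r a haz u hu huz _ (pow_mem_KK N a)
  rw [map_pow, R_self, hua] at h1
  have h2 := hf.add _ (key N).1 _ (pow_mem_KK N a)
  rw [inv_mul_cancel_right, h1, (key N).2] at h2
  have : (N : ℝ) ≠ 0 := by positivity
  have h3 : (N : ℝ) * f u = 0 := by linarith
  exact (mul_eq_zero.1 h3).resolve_left this

lemma cm_zero (hN : 0 < N) (hf : FZ N z f) (d b : Fin 4) : f (cm d b) = 0 := by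
  by_cases hd : d = z
  · subst hd
    rw [← hf.p _ (cm_mem_KK N d b)]; simp [cm, hf.one]
  by_cases hb : b = z
  · subst hb
    rw [← hf.p _ (cm_mem_KK N d b)]; simp [cm, hf.one]
  by_cases hbd : d = b
  · subst hbd; simp [cm, hf.one]
  obtain ⟨j, hjz, hjb, hjd⟩ := fourth z b d
  set u : F4 := cm d b with hu'
  have hu : u ∈ KK N := cm_mem_KK N d b
  have huz : pz z u = u := pz_cm hd hb
  have huj : pz j u = u := pz_cm hjd.symm hjb.symm
  have key : ∀ n : ℕ, of d * of b ^ n * (of d)⁻¹ * (of b ^ n)⁻¹ ∈ KK N ∧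
      f (of d * of b ^ n * (of d)⁻¹ * (of b ^ n)⁻¹) = n * f u := by
    intro n
    induction n with
    | zero => simp [hf.one]
    | succ n ih =>
      have e1 : of d * of b ^ (n+1) * (of d)⁻¹ * (of b ^ (n+1))⁻¹ =
        (of d * of b ^ n * (of d)⁻¹ * (of b ^ n)⁻¹) * (of b ^ n * u * (of b ^ n)⁻¹) := by
        rw [hu', cm, pow_succ]; group
      rw [e1]
      refine ⟨mul_mem ih.1 (nc _ hu), ?_⟩
      rw [hf.add _ ih.1 _ (nc _ hu), ih.2, hf.star_pow hu huz huj hjb.symm hjz]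
      push_cast; ring
  have h2 := hf.add _ (nc (of d) (pow_mem_KK N b)) _ (inv_mem (pow_mem_KK N b))
  rw [(key N).2, hf.inv (pow_mem_KK N b), (hf.conj (of d)).pow_zero' hN b, hf.pow_zero' hN b] at h2
  have : (N : ℝ) ≠ 0 := by positivity
  have h3 : (N : ℝ) * f u = 0 := by linarith
  exact (mul_eq_zero.1 h3).resolve_left this

lemma zero (hN : 0 < N) (hf : FZ N z f) {k : F4} (hk : k ∈ KK N) : f k = 0 := by
  let P : Subgroup F4 := {
    carrier := {k | k ∈ KK N ∧ ∀ h, f (h * k * h⁻¹) = 0}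
    one_mem' := ⟨one_mem _, fun h => by simp [hf.one]⟩
    mul_mem' := by
      rintro a b ⟨ha, ha'⟩ ⟨hb, hb'⟩
      refine ⟨mul_mem ha hb, fun h => ?_⟩
      have := (hf.conj h).add a ha b hb
      rw [this, ha', hb', add_zero]
    inv_mem' := by
      rintro a ⟨ha, ha'⟩
      refine ⟨inv_mem ha, fun h => ?_⟩
      have := (hf.conj h).inv ha
      rw [this, ha', neg_zero] }
  have hP : P.Normal := ⟨by
    rintro k ⟨hk, hk'⟩ g
    refine ⟨nc g hk, fun h => ?_⟩
    rw [← hk' (h * g)]; congr 1; group⟩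
  have hle : KK N ≤ P := by
    apply Subgroup.normalClosure_le_normal
    rintro w (⟨i, rfl⟩ | ⟨i, j, rfl⟩)
    · exact ⟨pow_mem_KK N i, fun h => (hf.conj h).pow_zero' hN i⟩
    · exact ⟨cm_mem_KK N i j, fun h => (hf.conj h).cm_zero hN i j⟩
  have := (hle hk).2 1
  simpa using this

end FZ

def Hgen (N : ℕ) : Set (MulAut F4) := {g | ∃ z, ∃ k ∈ KK N, g = R z k ∨ g = L z k}
def HH (N : ℕ) : Subgroup (MulAut F4) := Subgroup.closure (Hgen N)

lemma R_mem_HH {N : ℕ} (z : Fin 4) {k : F4} (hk : k ∈ KK N) : R z k ∈ HH N :=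
  Subgroup.subset_closure ⟨z, k, hk, Or.inl rfl⟩
lemma L_mem_HH {N : ℕ} (z : Fin 4) {k : F4} (hk : k ∈ KK N) : L z k ∈ HH N :=
  Subgroup.subset_closure ⟨z, k, hk, Or.inr rfl⟩

lemma HH_noreal {N : ℕ} (hN : 0 < N) (ψ : HH N →* Multiplicative ℝ) : ψ = 1 := by
  classical
  let φ : MulAut F4 → ℝ := fun g => if h : g ∈ HH N then (ψ ⟨g, h⟩).toAdd else 0
  have hd : ∀ g (h : g ∈ HH N), φ g = (ψ ⟨g, h⟩).toAdd := fun g h => dif_pos h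
  have hadd : ∀ a ∈ HH N, ∀ b ∈ HH N, φ (a * b) = φ a + φ b := by
    intro a ha b hb
    rw [hd a ha, hd b hb, hd _ (mul_mem ha hb), ← toAdd_mul, ← map_mul ψ]; rfl
  have hinv : ∀ a ∈ HH N, φ a⁻¹ = - φ a := by
    intro a ha
    rw [hd a ha, hd _ (inv_mem ha), ← toAdd_inv, ← map_inv ψ]; rfl
  have hconj : ∀ a ∈ HH N, ∀ b ∈ HH N, φ (a * b * a⁻¹) = φ b := by
    intro a ha b hb
    rw [hadd _ (mul_mem ha hb) _ (inv_mem ha), hadd _ ha _ hb, hinv _ ha]; ring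
  have hR : ∀ z, FZ N z (fun k => φ (R z k)) := by
    intro z
    refine ⟨?_, ?_, ?_⟩
    · intro x hx y hy
      show φ _ = φ _ + φ _
      rw [map_mul, hadd _ (R_mem_HH z hx) _ (R_mem_HH z hy)]
    · intro k hk; show φ _ = φ _; rw [R_p]
    · intro j hj u hu huz k hk
      show φ _ = φ _
      rw [← R_conj_R hj.symm huz, hconj _ (R_mem_HH j hu) _ (R_mem_HH z hk)]
  have hL : ∀ z, FZ N z (fun k => φ (L z k)) := by
    intro z
    refine ⟨?_, ?_, ?_⟩
    · intro x hx y hy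
      show φ _ = φ _ + φ _
      rw [map_mul, hadd _ (L_mem_HH z hx) _ (L_mem_HH z hy)]
    · intro k hk; show φ _ = φ _; rw [L_p]
    · intro j hj u hu huz k hk
      show φ _ = φ _
      rw [← R_conj_L hj.symm huz, hconj _ (R_mem_HH j hu) _ (L_mem_HH z hk)]
  have hz : ∀ g ∈ HH N, φ g = 0 := by
    intro g hg
    have hg' := hg
    unfold HH at hg'
    induction hg' using Subgroup.closure_induction with
    | mem x hx =>
      obtain ⟨z, k, hk, rfl | rfl⟩ := hx
      · exact (hR z).zero hN hk
      · exact (hL z).zero hN hk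
    | one => have := hadd 1 (one_mem _) 1 (one_mem _); simp at this; exact this
    | mul a b ha hb iha ihb => rw [hadd a ha b hb, iha ha, ihb hb, add_zero]
    | inv a ha iha => rw [hinv a ha, iha ha, neg_zero]
  ext ⟨g, hg⟩
  have := hz g hg
  rw [hd g hg] at this
  exact this

lemma commute_of_letters {G : Type*} [Group G] {q : F4 →* G}
    (h : ∀ i j, Commute (q (of i)) (q (of j))) (v w : F4) : Commute (q v) (q w) := by
  have h1 : ∀ i (w : F4), Commute (q (of i)) (q w) := by
    intro i w
    induction w using FreeGroup.induction_on with
    | C1 => rw [map_one]; exact Commute.one_right _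
    | of j => exact h i j
    | inv_of j _ => rw [map_inv]; exact (h i j).inv_right
    | mul a b ha hb => rw [map_mul]; exact ha.mul_right hb
  induction v using FreeGroup.induction_on with
  | C1 => rw [map_one]; exact Commute.one_left _
  | of j => exact h1 j w
  | inv_of j _ => rw [map_inv]; exact (h1 j w).inv_left
  | mul a b ha hb => rw [map_mul]; exact ha.mul_left hb

lemma commute_of_cm {G : Type*} [Group G] {q : F4 →* G}
    (h : ∀ i j, q (cm i j) = 1) (v w : F4) : Commute (q v) (q w) := by
  apply commute_of_letters
  intro i j
  have := h i j
  simp only [cm, map_mul, map_inv] at this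
  exact mul_inv_eq_iff_eq_mul.1 (mul_inv_eq_one.1 this)

lemma KK_fg {N : ℕ} (hN : 0 < N) : (KK N).FG := by
  have hc : ∀ v w : F4, Commute (QuotientGroup.mk' (KK N) v) (QuotientGroup.mk' (KK N) w) :=
    commute_of_cm (fun i j => (QuotientGroup.eq_one_iff _).2 (cm_mem_KK N i j))
  let _ : CommGroup (F4 ⧸ KK N) :=
    { (inferInstance : Group (F4 ⧸ KK N)) with
      mul_comm := by
        intro a b
        induction a using QuotientGroup.induction_on with | _ a
        induction b using QuotientGroup.induction_on with | _ b
        exact hc a b }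
  have hfin : Finite (F4 ⧸ KK N) := by
    have hfg : Group.FG (F4 ⧸ KK N) := QuotientGroup.fg _
    apply CommGroup.finite_of_fg_isMulTorsion
    have ht : ∀ w : F4, (QuotientGroup.mk' (KK N) w) ^ N = 1 := by
      intro w
      induction w using FreeGroup.induction_on with
      | C1 => rw [map_one, one_pow]
      | of j => rw [← map_pow]; exact (QuotientGroup.eq_one_iff _).2 (pow_mem_KK N j)
      | inv_of j h => rw [map_inv, inv_pow, h, inv_one]
      | mul a b ha hb => rw [map_mul, (hc a b).mul_pow, ha, hb, one_mul]
    intro a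
    induction a using QuotientGroup.induction_on with | _ a
    exact isOfFinOrder_iff_pow_eq_one.2 ⟨N, hN, ht a⟩
  have hfi : (KK N).FiniteIndex := Subgroup.finiteIndex_of_finite_quotient
  rw [← Group.fg_iff_subgroup_fg]
  exact Subgroup.fg_of_index_ne_zero _

lemma HH_fg {N : ℕ} (hN : 0 < N) : (HH N).FG := by
  obtain ⟨S, hS⟩ := KK_fg hN
  rw [Subgroup.fg_iff]
  refine ⟨⋃ z, (R z '' S ∪ L z '' S), ?_, ?_⟩
  · apply le_antisymm
    · rw [Subgroup.closure_le]
      intro g hg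
      simp only [Set.mem_iUnion, Set.mem_union, Set.mem_image] at hg
      obtain ⟨z, ⟨k, hk, rfl⟩ | ⟨k, hk, rfl⟩⟩ := hg
      · exact R_mem_HH z (hS ▸ Subgroup.subset_closure hk)
      · exact L_mem_HH z (hS ▸ Subgroup.subset_closure hk)
    · unfold HH
      rw [Subgroup.closure_le]
      rintro g ⟨z, k, hk, rfl | rfl⟩
      · rw [← hS] at hk
        have := Subgroup.mem_map_of_mem (R z) hk
        rw [MonoidHom.map_closure] at this
        exact Subgroup.closure_mono (fun x hx => Set.mem_iUnion.2 ⟨z, Or.inl hx⟩) this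
      · rw [← hS] at hk
        have := Subgroup.mem_map_of_mem (L z) hk
        rw [MonoidHom.map_closure] at this
        exact Subgroup.closure_mono (fun x hx => Set.mem_iUnion.2 ⟨z, Or.inr hx⟩) this
  · apply Set.finite_iUnion
    intro z
    exact (S.finite_toSet.image _).union (S.finite_toSet.image _)

end FA

namespace FA
open FreeGroup (of lift)

def Sgen (m : ℕ) : Set (MulAut F4) :=
  {g | (∃ z i, i ≠ z ∧ g = R z (of i ^ m)) ∨ (∃ z i j, i ≠ z ∧ j ≠ z ∧ i ≠ j ∧ g = R z (cm i j)) ∨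
    ∃ z i, i ≠ z ∧ g = kap z (of i)}

def SS (m : ℕ) : Subgroup (MulAut F4) := Subgroup.normalClosure (Sgen m)

instance (m : ℕ) : (SS m).Normal := Subgroup.normalClosure_normal

lemma SS_conj {m : ℕ} {g : MulAut F4} (γ : MulAut F4) (h : g ∈ SS m) : γ * g * γ⁻¹ ∈ SS m :=
  Subgroup.Normal.conj_mem inferInstance g h γ

lemma R_z_one (z : Fin 4) {w : F4} (h : pz z w = 1) : R z w = 1 := by
  rw [← R_p, h, map_one]

lemma R_mem_SS {m : ℕ} (z : Fin 4) {w : F4} (hw : w ∈ KK m) : R z w ∈ SS m := by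
  let P : Subgroup F4 := (SS m).comap (R z)
  have hP : P.Normal := ⟨by
    intro k hk g
    show R z _ ∈ SS m
    rw [← cz_conj_R]
    exact SS_conj _ hk⟩
  have : KK m ≤ P := by
    apply Subgroup.normalClosure_le_normal
    rintro w (⟨i, rfl⟩ | ⟨i, j, rfl⟩)
    · show R z _ ∈ SS m
      by_cases h : i = z
      · subst h
        rw [R_z_one i (by simp)]; exact one_mem _
      · exact Subgroup.subset_normalClosure (Or.inl ⟨z, i, h, rfl⟩)
    · show R z _ ∈ SS m
      by_cases h : i = z
      · subst h
        rw [R_z_one i (by simp [cm])]; exact one_mem _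
      by_cases h' : j = z
      · subst h'
        rw [R_z_one j (by simp [cm])]; exact one_mem _
      by_cases h'' : i = j
      · subst h''
        rw [R_z_one z (by simp [cm])]; exact one_mem _
      · exact Subgroup.subset_normalClosure (Or.inr (Or.inl ⟨z, i, j, h, h', h'', rfl⟩))
  exact this hw

lemma free_mem {G : Type*} [Group G] (f : F4 →* G) (P : Subgroup G) (h : ∀ i, f (of i) ∈ P) (w : F4) :
    f w ∈ P := by
  induction w using FreeGroup.induction_on with
  | C1 => rw [map_one]; exact one_mem _
  | of j => exact h j
  | inv_of j _ => rw [map_inv]; exact inv_mem (h j)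
  | mul a b ha hb => rw [map_mul]; exact mul_mem ha hb

lemma kap_mem_SS (m : ℕ) (z : Fin 4) (g : F4) : kap z g ∈ SS m := by
  apply free_mem
  intro i
  by_cases h : i = z
  · subst h
    rw [kap_def, ← R_p, ← L_p, pz_self, map_one, map_one, one_mul]; exact one_mem _
  · exact Subgroup.subset_normalClosure (Or.inr (Or.inr ⟨z, i, h, rfl⟩))

lemma L_eq (z : Fin 4) (k : F4) : L z k = (R z k)⁻¹ * kap z k := by
  rw [kap_def, inv_mul_cancel_left]

lemma L_mem_SS {m : ℕ} (z : Fin 4) {w : F4} (hw : w ∈ KK m) : L z w ∈ SS m := by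
  rw [L_eq]; exact mul_mem (inv_mem (R_mem_SS z hw)) (kap_mem_SS m z w)

lemma five : ∀ a b c d : Fin 4, b ≠ a → c ≠ a → c ≠ b → d ≠ a → d ≠ b → d ≠ c →
    ∀ l, l = a ∨ l = b ∨ l = c ∨ l = d := by decide

lemma cz_mem_SS (m : ℕ) (z : Fin 4) (g : F4) : cz z g ∈ SS m := by
  apply free_mem
  intro i
  by_cases h : i = z
  · subst h
    rw [cz_def, kap_def, ← R_p, ← L_p, pz_self, map_one, map_one, map_one, one_mul, one_mul]
    exact one_mem _
  · obtain ⟨j, hjz, hji, -⟩ := fourth z i i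
    obtain ⟨j', hjz', hji', hjj⟩ := fourth z i j
    have : cz z (of i) = (kap j (of i)⁻¹) * (kap j' (of i)⁻¹) := by
      apply mulAut_ext
      intro l
      rw [MulAut.mul_apply]
      rcases five z i j j' h hjz hji hjz' hji' hjj l with rfl | rfl | rfl | rfl
      · rw [cz_self, kap_ne hjz'.symm, kap_ne hjz.symm]
      · rw [cz_ne h, kap_ne hji'.symm, kap_ne hji.symm, pz_ne h]; group
      · rw [cz_ne hjz, kap_ne hjj.symm, kap_self, map_inv, pz_ne hji.symm, pz_ne h]; group
      · rw [cz_ne hjz', kap_self, (pz l).map_inv, pz_ne hji'.symm, pz_ne h]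
        rw [inv_inv, map_mul (kap j (of i)⁻¹), map_mul (kap j (of i)⁻¹), map_inv (kap j (of i)⁻¹), kap_ne hji.symm, kap_ne hjj]
    rw [this]
    exact mul_mem (kap_mem_SS m _ _) (kap_mem_SS m _ _)

lemma KK_mono (m e : ℕ) : KK (m * e) ≤ KK m := by
  apply Subgroup.normalClosure_le_normal
  rintro w (⟨i, rfl⟩ | ⟨i, j, rfl⟩)
  · show _ ∈ KK m
    rw [pow_mul]; exact pow_mem (pow_mem_KK m i) e
  · exact cm_mem_KK m i j

lemma com_mem_KK (m : ℕ) (v w : F4) : v * w * v⁻¹ * w⁻¹ ∈ KK m := by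
  have hc : Commute (QuotientGroup.mk' (KK m) v) (QuotientGroup.mk' (KK m) w) :=
    commute_of_cm (fun i j => (QuotientGroup.eq_one_iff _).2 (cm_mem_KK m i j)) v w
  rw [← QuotientGroup.eq_one_iff]
  show QuotientGroup.mk' (KK m) v * QuotientGroup.mk' (KK m) w * (QuotientGroup.mk' (KK m) v)⁻¹ * (QuotientGroup.mk' (KK m) w)⁻¹ = 1
  rw [hc.eq, mul_inv_cancel_right, mul_inv_cancel]

section char
variable {C : Type*} [CommGroup C]

structure CX (m : ℕ) (X : MulAut F4 → C) : Prop where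
  mul : ∀ a ∈ SS m, ∀ b ∈ SS m, X (a * b) = X a * X b

def tw (γ : MulAut F4) (X : MulAut F4 → C) : MulAut F4 → C := fun g => X (γ * g * γ⁻¹)

lemma tw_tw (γ δ : MulAut F4) (X : MulAut F4 → C) : tw γ (tw δ X) = tw (δ * γ) X := by
  funext g; simp only [tw, mul_inv_rev, mul_assoc]

namespace CX
variable {m : ℕ} {X : MulAut F4 → C}

lemma tw (hX : CX m X) (γ : MulAut F4) : CX m (tw γ X) := ⟨by
  intro a ha b hb
  simp only [FA.tw]
  rw [← hX.mul _ (SS_conj γ ha) _ (SS_conj γ hb)]; congr 1; group⟩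

lemma one (hX : CX m X) : X 1 = 1 := by
  have := hX.mul 1 (one_mem _) 1 (one_mem _); simpa using this

lemma inv (hX : CX m X) {g : MulAut F4} (hg : g ∈ SS m) : X g⁻¹ = (X g)⁻¹ := by
  have := hX.mul g hg _ (inv_mem hg)
  rw [mul_inv_cancel, hX.one] at this
  exact (inv_eq_of_mul_eq_one_right this.symm).symm

lemma conj (hX : CX m X) {g s : MulAut F4} (hg : g ∈ SS m) (hs : s ∈ SS m) :
    X (s * g * s⁻¹) = X g := by
  rw [hX.mul _ (mul_mem hs hg) _ (inv_mem hs), hX.mul _ hs _ hg, hX.inv hs, mul_comm (X s),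
    mul_inv_cancel_right]

lemma r_mul (hX : CX m X) (z : Fin 4) {v w : F4} (hv : v ∈ KK m) (hw : w ∈ KK m) :
    X (R z (v * w)) = X (R z v) * X (R z w) := by
  rw [map_mul, hX.mul _ (R_mem_SS z hv) _ (R_mem_SS z hw)]

lemma r_inv (hX : CX m X) (z : Fin 4) {v : F4} (hv : v ∈ KK m) :
    X (R z v⁻¹) = (X (R z v))⁻¹ := by
  rw [map_inv, hX.inv (R_mem_SS z hv)]

lemma r_conj (hX : CX m X) (z : Fin 4) (g : F4) {w : F4} (hw : w ∈ KK m) :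
    X (R z (g * w * g⁻¹)) = X (R z w) := by
  rw [← cz_conj_R, hX.conj (R_mem_SS z hw) (cz_mem_SS m z g)]

/-- commutator pairing -/
lemma B_mul (hX : CX m X) (z : Fin 4) (a b c : F4) :
    X (R z (a * b * c * (a * b)⁻¹ * c⁻¹)) = X (R z (a * c * a⁻¹ * c⁻¹)) * X (R z (b * c * b⁻¹ * c⁻¹)) := by
  have : a * b * c * (a * b)⁻¹ * c⁻¹ = (a * (b * c * b⁻¹ * c⁻¹) * a⁻¹) * (a * c * a⁻¹ * c⁻¹) := by group
  rw [this, hX.r_mul z (FZ.nc a (com_mem_KK m b c)) (com_mem_KK m a c), hX.r_conj z a (com_mem_KK m b c), mul_comm]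

lemma B_pow (hX : CX m X) (z : Fin 4) (b c : F4) (s : ℕ) :
    X (R z (b ^ s * c * (b ^ s)⁻¹ * c⁻¹)) = X (R z (b * c * b⁻¹ * c⁻¹)) ^ s := by
  induction s with
  | zero => simp [hX.one]
  | succ s ih => rw [pow_succ, hX.B_mul, ih, pow_succ]

lemma t_symm (hX : CX m X) (z i j : Fin 4) : X (R z (cm j i)) = (X (R z (cm i j)))⁻¹ := by
  rw [← hX.r_inv z (cm_mem_KK m i j)]; simp [cm, mul_assoc]

/-- transformation under `R i (x_k^s)`, first kind -/
lemma T1 (hX : CX m X) {z i k j : Fin 4} (hiz : i ≠ z) (hkz : k ≠ z) (hki : k ≠ i) (hji : j ≠ i) (s : ℕ) :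
    FA.tw (R i (of k ^ s)) X (R z (cm i j)) = X (R z (cm i j)) * X (R z (cm k j)) ^ s := by
  unfold FA.tw
  rw [R_conj_R hiz.symm (pz_pow hkz s)]
  have : R i (of k ^ s) (cm i j) = of i * of k ^ s * of j * (of i * of k ^ s)⁻¹ * (of j)⁻¹ := by
    simp only [cm, map_mul, map_inv, R_self, R_ne hji, pz_pow hki]
  rw [this, hX.B_mul, hX.B_pow]; rfl

lemma T1' {z i k a b : Fin 4} (hiz : i ≠ z) (hkz : k ≠ z) (ha : a ≠ i) (hb : b ≠ i) (s : ℕ) :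
    FA.tw (R i (of k ^ s)) X (R z (cm a b)) = X (R z (cm a b)) := by
  unfold FA.tw
  rw [R_conj_R hiz.symm (pz_pow hkz s), R_fix (pz_cm ha hb)]

lemma T3 (hX : CX m X) {z k : Fin 4} {w : F4} (hw : w ∈ KK m) (s : ℕ) :
    FA.tw (R z (of k ^ s)) X (R z w) = X (R z w) := by
  unfold FA.tw
  rw [← map_inv, ← map_mul, ← map_mul, hX.r_conj z _ hw]

/-- second kind -/
lemma T2 (hX : CX m X) {z i j k : Fin 4} (hkz : k ≠ z) (hiz : i ≠ z) (hjz : j ≠ z) (hik : i ≠ k) (hjk : j ≠ k) (s : ℕ) :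
    FA.tw (R k (of z ^ s)) X (R z (cm i j)) = X (R z (cm i j)) * ((X (R k (cm i j)))⁻¹) ^ s := by
  set w : F4 := cm i j with hw'
  have hwz : pz z w = w := pz_cm hiz hjz
  have hwk : pz k w = w := pz_cm hik hjk
  have hw : w ∈ KK m := cm_mem_KK m i j
  have key : ∀ n : ℕ, of z ^ n * ((of z * w) ^ n)⁻¹ ∈ KK m ∧
      X (R k (of z ^ n * ((of z * w) ^ n)⁻¹)) = ((X (R k w))⁻¹) ^ n := by
    intro n
    induction n with
    | zero => simp [hX.one]
    | succ n ih =>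
      have e1 : of z ^ (n+1) * ((of z * w) ^ (n+1))⁻¹ =
          (of z ^ (n+1) * w⁻¹ * (of z ^ (n+1))⁻¹) * (of z ^ n * ((of z * w) ^ n)⁻¹) := by
        rw [pow_succ, pow_succ]; group
      have hc := FZ.nc (of z ^ (n+1)) (inv_mem hw)
      rw [e1]
      refine ⟨mul_mem hc ih.1, ?_⟩
      rw [hX.r_mul k hc ih.1, hX.r_conj k _ (inv_mem hw), hX.r_inv k hw, ih.2, pow_succ']
  have e : R k (of z ^ s) * R z w * (R k (of z ^ s))⁻¹ = R k (of z ^ s * ((of z * w) ^ s)⁻¹) * R z w := by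
    rw [mul_inv_eq_iff_eq_mul]
    apply mulAut_ext
    intro l
    simp only [MulAut.mul_apply]
    have hq : pz k (of z ^ s * ((of z * w) ^ s)⁻¹) = of z ^ s * ((of z * w) ^ s)⁻¹ := by
      simp [pz_ne hkz.symm, hwk]
    generalize hqq : of z ^ s * ((of z * w) ^ s)⁻¹ = q at hq
    by_cases h1 : l = k
    · subst h1
      rw [R_ne hkz, R_self, pz_pow hkz.symm, map_mul, map_mul, R_ne hkz, R_self, hq, map_pow,
        R_self, hwz, map_pow, map_mul, R_ne hkz.symm, R_fix hwk, ← hqq]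
      group
    by_cases h2 : l = z
    · subst h2
      rw [R_self, R_ne h1, R_self, map_mul, map_mul, R_ne h1, R_ne h1, hwz, R_fix hwk, R_fix hwk]
    · rw [R_ne h2, R_ne h1, R_ne h2, R_ne h1]
  unfold FA.tw
  rw [e, hX.mul _ (R_mem_SS k (key s).1) _ (R_mem_SS z hw), (key s).2, mul_comm]

end CX
end char

end FA

namespace FA
open FreeGroup (of lift)

variable {C : Type*} [CommGroup C]

def MX (o : ℕ) (X : MulAut F4 → C) : Prop :=
  ∀ γ z i j, i ≠ z → j ≠ z → i ≠ j → orderOf (tw γ X (R z (cm i j))) ≤ o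

lemma MX.tw {o : ℕ} {X : MulAut F4 → C} (h : MX o X) (γ : MulAut F4) : MX o (tw γ X) := by
  intro δ z i j hi hj hij
  rw [tw_tw]; exact h _ z i j hi hj hij

lemma exists_perm : ∀ z i j : Fin 4, i ≠ z → j ≠ z → i ≠ j →
    ∃ π : Equiv.Perm (Fin 4), π 0 = z ∧ π 2 = i ∧ π 3 = j := by decide

lemma exists_MX [Finite C] (X : MulAut F4 → C) :
    ∃ γ, MX (orderOf (tw γ X (R 0 (cm 2 3)))) X := by
  have hfin : (Set.range (fun γ => orderOf (tw γ X (R 0 (cm 2 3))))).Finite := by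
    apply Set.Finite.subset (Set.finite_range (fun c : C => orderOf c))
    rintro _ ⟨γ, rfl⟩
    exact ⟨_, rfl⟩
  obtain ⟨_, ⟨γ, rfl⟩, hγ⟩ := Set.exists_max_image _ id hfin ⟨_, 1, rfl⟩
  refine ⟨γ, ?_⟩
  intro δ z i j hi hj hij
  obtain ⟨π, h0, h2, h3⟩ := exists_perm z i j hi hj hij
  have h1 : Pm π * R 0 (cm 2 3) * (Pm π)⁻¹ = R z (cm i j) := by
    rw [Pm_conj_R, h0]; simp only [cm, map_mul, map_inv, Pm_of, h2, h3]
  have h4 : tw δ X (R z (cm i j)) = tw (δ * Pm π) X (R 0 (cm 2 3)) := by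
    rw [← h1]; simp only [tw, mul_inv_rev, mul_assoc]
  rw [h4]
  exact hγ _ ⟨_, rfl⟩

section
variable [IsCyclic C] [Finite C] {m o : ℕ} {X : MulAut F4 → C}

lemma N1 (hX : CX m X) (hM : MX o X) {z i j k : Fin 4} (hi : i ≠ z) (hj : j ≠ z) (hij : i ≠ j)
    (ho : orderOf (X (R z (cm i j))) = o) (hk : k ≠ z) :
    X (R z (cm k j)) ∈ Subgroup.zpowers (X (R z (cm i j))) := by
  by_cases hki : k = i
  · subst hki; exact Subgroup.mem_zpowers _
  apply mem_zpowers_of_max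
  intro s
  rw [← hX.T1 hi hk hki hij.symm s, ho]
  exact hM _ z i j hi hj hij

lemma N2 (hX : CX m X) (hM : MX o X) {z i j k : Fin 4} (hi : i ≠ z) (hj : j ≠ z) (hij : i ≠ j)
    (ho : orderOf (X (R z (cm i j))) = o) (hk : k ≠ z) (hik : i ≠ k) (hjk : j ≠ k) :
    X (R k (cm i j)) ∈ Subgroup.zpowers (X (R z (cm i j))) := by
  rw [← inv_mem_iff]
  apply mem_zpowers_of_max
  intro s
  rw [← hX.T2 hk hi hj hik hjk s, ho]
  exact hM _ z i j hi hj hij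

lemma exists_pow {a b c : C} (hb : b ∈ Subgroup.zpowers a) (hc : c ∈ Subgroup.zpowers a) :
    ∃ s : ℕ, b * a ^ s = c := by
  have : b⁻¹ * c ∈ Subgroup.zpowers a := mul_mem (inv_mem hb) hc
  rw [← mem_powers_iff_mem_zpowers] at this
  obtain ⟨s, hs⟩ := this
  exact ⟨s, by simp only at hs; rw [hs, mul_inv_cancel_left]⟩

/-- one normalisation step -/
lemma stepA (hX : CX m X) (hM : MX o X) (a : C) (ha : X (R 0 (cm 2 3)) = a) (ho : orderOf a = o) :
    ∃ γ, tw γ X (R 0 (cm 2 3)) = a ∧ tw γ X (R 0 (cm 1 3)) = a ∧ tw γ X (R 0 (cm 1 2)) = a := by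
  have h1 : X (R 0 (cm 1 3)) ∈ Subgroup.zpowers (X (R 0 (cm 2 3))) :=
    N1 hX hM (by decide) (by decide) (by decide) (ha ▸ ho) (by decide)
  have h32 : X (R 0 (cm 3 2)) = a⁻¹ := by rw [hX.t_symm 0 2 3, ha]
  rw [ha] at h1
  obtain ⟨s, hs⟩ := exists_pow h1 (Subgroup.mem_zpowers a)
  set Y := tw (R 1 (of 2 ^ s)) X with hY
  have cY : CX m Y := hX.tw _
  have mY : MX o Y := hM.tw _
  have y23 : Y (R 0 (cm 2 3)) = a := by
    rw [hY, CX.T1' (by decide) (by decide) (by decide) (by decide), ha]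
  have y13 : Y (R 0 (cm 1 3)) = a := by
    rw [hY, hX.T1 (by decide) (by decide) (by decide) (by decide), ha, hs]
  have y32 : Y (R 0 (cm 3 2)) = a⁻¹ := by rw [cY.t_symm 0 2 3, y23]
  have h2 : Y (R 0 (cm 1 2)) ∈ Subgroup.zpowers (Y (R 0 (cm 3 2))) :=
    N1 cY mY (by decide) (by decide) (by decide) (by rw [y32, orderOf_inv, ho]) (by decide)
  rw [y32] at h2
  obtain ⟨s', hs'⟩ := exists_pow (c := a) h2 (by rw [Subgroup.zpowers_inv]; exact Subgroup.mem_zpowers a)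
  refine ⟨R 1 (of 2 ^ s) * R 1 (of 3 ^ s'), ?_⟩
  rw [← tw_tw, ← hY]
  refine ⟨?_, ?_, ?_⟩
  · rw [CX.T1' (by decide) (by decide) (by decide) (by decide), y23]
  · rw [cY.T1 (by decide) (by decide) (by decide) (by decide), y13]
    have : (R 0 (cm 3 3) : MulAut F4) = 1 := by rw [R_z_one]; simp [cm]
    rw [this, cY.one, one_pow, mul_one]
  · rw [cY.T1 (by decide) (by decide) (by decide) (by decide), y32, hs']

lemma stepB (hX : CX m X) (hM : MX o X) {k i j : Fin 4} (hk : k ≠ 0) (hi : i ≠ 0) (hj : j ≠ 0)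
    (hij : i ≠ j) (hik : i ≠ k) (hjk : j ≠ k) (ho : orderOf (X (R 0 (cm i j))) = o) :
    ∃ γ, (∀ p q, tw γ X (R 0 (cm p q)) = X (R 0 (cm p q))) ∧
      tw γ X (R k (cm i j)) = X (R 0 (cm i j)) ∧
      ∀ z p q, z ≠ 0 → z ≠ k → p ≠ 0 → q ≠ 0 → tw γ X (R z (cm p q)) = X (R z (cm p q)) := by
  have h1 := N2 hX hM hi hj hij ho hk hik hjk
  obtain ⟨s, hs⟩ := exists_pow (a := (X (R 0 (cm i j)))⁻¹) (c := X (R 0 (cm i j)))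
    (by rw [Subgroup.zpowers_inv]; exact h1) (by rw [Subgroup.zpowers_inv]; exact Subgroup.mem_zpowers _)
  refine ⟨R 0 (of k ^ s), ?_, ?_, ?_⟩
  · intro p q; exact hX.T3 (cm_mem_KK m p q) s
  · rw [hX.T2 hk.symm hik hjk hi hj, hs]
  · intro z p q hz hzk hp hq
    unfold tw
    rw [(RR_comm hz (pz_pow hzk.symm s) (pz_cm hp hq)).eq, mul_inv_cancel_right]

def GOOD (X : MulAut F4 → C) (a : C) : Prop :=
  X (R 0 (cm 2 3)) = a ∧ (∀ z i j, X (R z (cm i j)) ∈ Subgroup.zpowers a) ∧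
  ∀ z i j, i ≠ 0 → j ≠ 0 → i ≠ j → i ≠ z → j ≠ z → X (R z (cm i j)) = a ∨ X (R z (cm i j)) = a⁻¹

lemma cases3 : ∀ i : Fin 4, i ≠ 0 → i = 1 ∨ i = 2 ∨ i = 3 := by decide

lemma exists_good (hX : CX m X) : ∃ γ a, GOOD (tw γ X) a := by
  obtain ⟨γ0, hM0⟩ := exists_MX X
  set a := tw γ0 X (R 0 (cm 2 3)) with ha
  have hX1 : CX m (tw γ0 X) := hX.tw γ0
  have hM1 := hM0.tw γ0
  obtain ⟨γ1, b23, b13, b12⟩ := stepA hX1 hM1 a ha.symm rfl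
  rw [tw_tw] at b23 b13 b12
  set Y1 := tw (γ0 * γ1) X with hY1
  have cY1 : CX m Y1 := hX.tw _
  have mY1 : MX (orderOf a) Y1 := hM0.tw _
  obtain ⟨γ2, p1, p2, p3⟩ := stepB cY1 mY1 (k := 1) (i := 2) (j := 3) (by decide) (by decide)
    (by decide) (by decide) (by decide) (by decide) (by rw [b23])
  set Y2 := tw γ2 Y1 with hY2
  have cY2 : CX m Y2 := cY1.tw _
  have mY2 : MX (orderOf a) Y2 := mY1.tw _
  obtain ⟨γ3, q1, q2, q3⟩ := stepB cY2 mY2 (k := 2) (i := 1) (j := 3) (by decide) (by decide)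
    (by decide) (by decide) (by decide) (by decide) (by rw [p1, b13])
  set Y3 := tw γ3 Y2 with hY3
  have cY3 : CX m Y3 := cY2.tw _
  have mY3 : MX (orderOf a) Y3 := mY2.tw _
  obtain ⟨γ4, r1, r2, r3⟩ := stepB cY3 mY3 (k := 3) (i := 1) (j := 2) (by decide) (by decide)
    (by decide) (by decide) (by decide) (by decide) (by rw [q1, p1, b12])
  set Y4 := tw γ4 Y3 with hY4
  have cY4 : CX m Y4 := cY3.tw _
  have mY4 : MX (orderOf a) Y4 := mY3.tw _
  have e : Y4 = tw (γ0 * γ1 * γ2 * γ3 * γ4) X := by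
    rw [hY4, hY3, hY2, hY1]; simp only [tw_tw, mul_assoc]
  refine ⟨γ0 * γ1 * γ2 * γ3 * γ4, a, ?_⟩
  rw [← e]
  have f0 : ∀ p q, Y4 (R 0 (cm p q)) = Y1 (R 0 (cm p q)) := fun p q => by rw [r1, q1, p1]
  have g1 : Y4 (R 1 (cm 2 3)) = a := by
    rw [r3 _ _ _ (by decide) (by decide) (by decide) (by decide),
      q3 _ _ _ (by decide) (by decide) (by decide) (by decide), p2, b23]
  have g2 : Y4 (R 2 (cm 1 3)) = a := by
    rw [r3 _ _ _ (by decide) (by decide) (by decide) (by decide), q2, p1, b13]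
  have g3 : Y4 (R 3 (cm 1 2)) = a := by rw [r2, q1, p1, b12]
  have third : ∀ z i j, i ≠ 0 → j ≠ 0 → i ≠ j → i ≠ z → j ≠ z →
      Y4 (R z (cm i j)) = a ∨ Y4 (R z (cm i j)) = a⁻¹ := by
    have aux : ∀ z i j, i ≠ 0 → j ≠ 0 → i < j → i ≠ z → j ≠ z → Y4 (R z (cm i j)) = a := by
      intro z i j hi hj hij hiz hjz
      have : (z = 0 ∧ i = 1 ∧ j = 2) ∨ (z = 0 ∧ i = 1 ∧ j = 3) ∨ (z = 0 ∧ i = 2 ∧ j = 3) ∨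
        (z = 1 ∧ i = 2 ∧ j = 3) ∨ (z = 2 ∧ i = 1 ∧ j = 3) ∨ (z = 3 ∧ i = 1 ∧ j = 2) := by
        revert z i j; decide
      rcases this with ⟨rfl, rfl, rfl⟩ | ⟨rfl, rfl, rfl⟩ | ⟨rfl, rfl, rfl⟩ | ⟨rfl, rfl, rfl⟩ |
        ⟨rfl, rfl, rfl⟩ | ⟨rfl, rfl, rfl⟩
      · rw [f0, b12]
      · rw [f0, b13]
      · rw [f0, b23]
      · exact g1
      · exact g2
      · exact g3
    intro z i j hi hj hij hiz hjz
    rcases lt_or_gt_of_ne hij with h | h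
    · exact Or.inl (aux z i j hi hj h hiz hjz)
    · right
      rw [cY4.t_symm z j i, aux z j i hj hi h hjz hiz]
  refine ⟨by rw [f0, b23], ?_, third⟩
  have triv : ∀ z i j, (i = z ∨ j = z ∨ i = j) → Y4 (R z (cm i j)) ∈ Subgroup.zpowers a := by
    intro z i j h
    have : (R z (cm i j) : MulAut F4) = 1 := by
      apply R_z_one
      rcases h with rfl | rfl | rfl <;> simp [cm]
    rw [this, cY4.one]; exact one_mem _
  have aux0 : ∀ z j, z ≠ 0 → j ≠ 0 → j ≠ z → Y4 (R z (cm 0 j)) ∈ Subgroup.zpowers a := by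
    intro z j hz hj hjz
    obtain ⟨i, hi0, hij, hiz⟩ := fourth 0 j z
    have h1 := third z i j hi0 hj hij hiz hjz
    have h2 : orderOf (Y4 (R z (cm i j))) = orderOf a := by
      rcases h1 with h | h <;> rw [h]
      exact orderOf_inv a
    have h3 := N1 cY4 mY4 hiz hjz hij h2 hz.symm
    have h4 : Subgroup.zpowers (Y4 (R z (cm i j))) = Subgroup.zpowers a := by
      rcases h1 with h | h <;> rw [h]
      exact Subgroup.zpowers_inv
    rwa [h4] at h3
  intro z i j
  by_cases hiz : i = z
  · exact triv z i j (Or.inl hiz)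
  by_cases hjz : j = z
  · exact triv z i j (Or.inr (Or.inl hjz))
  by_cases hij : i = j
  · exact triv z i j (Or.inr (Or.inr hij))
  by_cases hi : i = 0
  · subst hi
    exact aux0 z j (Ne.symm hiz) (Ne.symm hij) hjz
  by_cases hj : j = 0
  · subst hj
    rw [cY4.t_symm z 0 i, inv_mem_iff]
    exact aux0 z i (Ne.symm hjz) hi hiz
  rcases third z i j hi hj hij hiz hjz with h | h <;> rw [h]
  · exact Subgroup.mem_zpowers a
  · exact inv_mem (Subgroup.mem_zpowers a)

end
end FA

namespace FA
open FreeGroup (of lift)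

lemma KK_ind {N : ℕ} {m : ℕ} (h : KK N ≤ KK m) (P : F4 → Prop)
    (h1 : P 1) (hmul : ∀ a ∈ KK m, ∀ b ∈ KK m, P a → P b → P (a * b))
    (hinv : ∀ a ∈ KK m, P a → P a⁻¹) (hconj : ∀ a ∈ KK m, ∀ g, P a → P (g * a * g⁻¹))
    (hg : ∀ w ∈ Kgen N, P w) {k : F4} (hk : k ∈ KK N) : P k := by
  let Q : Subgroup F4 := {
    carrier := {k | k ∈ KK m ∧ P k}
    one_mem' := ⟨one_mem _, h1⟩
    mul_mem' := by
      rintro a b ⟨ha, ha'⟩ ⟨hb, hb'⟩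
      exact ⟨mul_mem ha hb, hmul a ha b hb ha' hb'⟩
    inv_mem' := by
      rintro a ⟨ha, ha'⟩
      exact ⟨inv_mem ha, hinv a ha ha'⟩ }
  have hQ : Q.Normal := ⟨by
    rintro k ⟨hk, hk'⟩ g
    exact ⟨FZ.nc g hk, hconj k hk g hk'⟩⟩
  have hle : KK N ≤ Q := Subgroup.normalClosure_le_normal (fun w hw =>
    ⟨h (Subgroup.subset_normalClosure hw), hg w hw⟩)
  exact (hle hk).2

lemma HH_le_SS (m e : ℕ) : HH (m * e) ≤ SS m := by
  unfold HH
  rw [Subgroup.closure_le]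
  rintro g ⟨z, k, hk, rfl | rfl⟩
  · exact R_mem_SS z (KK_mono m e hk)
  · exact L_mem_SS z (KK_mono m e hk)

section
variable {C : Type*} [CommGroup C] {m e : ℕ} {X : MulAut F4 → C}

lemma X_kap (hX : CX m X) (hC : ∀ c : C, c ^ e = 1) (z : Fin 4) {k : F4} (hk : k ∈ KK (m * e)) :
    X (kap z k) = 1 := by
  let q : F4 →* C := MonoidHom.mk' (fun w => X (kap z w)) (by
    intro a b
    rw [map_mul, hX.mul _ (kap_mem_SS m z a) _ (kap_mem_SS m z b)])
  have : KK (m * e) ≤ q.ker := by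
    apply Subgroup.normalClosure_le_normal
    rintro w (⟨i, rfl⟩ | ⟨i, j, rfl⟩)
    · show q _ = 1
      rw [map_pow, pow_mul, hC]
    · show q _ = 1
      simp only [cm, map_mul, map_inv]
      rw [mul_comm (q (of i)), mul_inv_cancel_right, mul_inv_cancel]
  exact this hk

lemma X_L (hX : CX m X) (hC : ∀ c : C, c ^ e = 1) (z : Fin 4) {k : F4} (hk : k ∈ KK (m * e)) :
    X (L z k) = (X (R z k))⁻¹ := by
  have hR := R_mem_SS z (KK_mono m e hk)
  rw [L_eq, hX.mul _ (inv_mem hR) _ (kap_mem_SS m z k), X_kap hX hC z hk, hX.inv hR, mul_one]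

lemma X_R_mem (hX : CX m X) (hC : ∀ c : C, c ^ e = 1) {a : C} (hG : GOOD X a) (z : Fin 4) {k : F4}
    (hk : k ∈ KK (m * e)) : X (R z k) ∈ Subgroup.zpowers a := by
  refine KK_ind (KK_mono m e) (fun k => X (R z k) ∈ Subgroup.zpowers a) ?_ ?_ ?_ ?_ ?_ hk
  · rw [map_one, hX.one]; exact one_mem _
  · intro a ha b hb h1 h2; rw [hX.r_mul z ha hb]; exact mul_mem h1 h2
  · intro a ha h1; rw [hX.r_inv z ha]; exact inv_mem h1
  · intro a ha g h1; rw [hX.r_conj z g ha]; exact h1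
  · rintro w (⟨i, rfl⟩ | ⟨i, j, rfl⟩)
    · have : ∀ s : ℕ, X (R z ((of i ^ m) ^ s)) = X (R z (of i ^ m)) ^ s := by
        intro s
        induction s with
        | zero => simp [hX.one]
        | succ s ih => rw [pow_succ, hX.r_mul z (pow_mem (pow_mem_KK m i) s) (pow_mem_KK m i), ih, pow_succ]
      rw [pow_mul, this, hC]; exact one_mem _
    · exact hG.2.1 z i j

lemma X_HH_mem (hX : CX m X) (hC : ∀ c : C, c ^ e = 1) {a : C} (hG : GOOD X a) {g : MulAut F4}
    (hg : g ∈ HH (m * e)) : X g ∈ Subgroup.zpowers a := by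
  unfold HH at hg
  induction hg using Subgroup.closure_induction with
  | mem x hx =>
    obtain ⟨z, k, hk, rfl | rfl⟩ := hx
    · exact X_R_mem hX hC hG z hk
    · rw [X_L hX hC z hk]; exact inv_mem (X_R_mem hX hC hG z hk)
  | one => rw [hX.one]; exact one_mem _
  | mul a b ha hb h1 h2 =>
    rw [hX.mul _ (HH_le_SS m e ha) _ (HH_le_SS m e hb)]; exact mul_mem h1 h2
  | inv a ha h1 => rw [hX.inv (HH_le_SS m e ha)]; exact inv_mem h1

def XH (hX : CX m X) (e : ℕ) : HH (m * e) →* C := MonoidHom.mk' (fun g => X g.1) (fun a b =>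
  hX.mul _ (HH_le_SS m e a.2) _ (HH_le_SS m e b.2))

lemma XH_noreal (hm : 0 < m) (he : 0 < e) (hX : CX m X) (hC : ∀ c : C, c ^ e = 1) {a : C}
    (hG : GOOD X a) (f : (XH hX e).ker →* Multiplicative ℝ) : f = 1 := by
  have hcm : ∀ i j, (cm i j : F4) ∈ KK (m * e) := cm_mem_KK (m * e)
  let RR : ∀ (z : Fin 4) (k : F4), k ∈ KK (m * e) → HH (m * e) := fun z k hk => ⟨R z k, R_mem_HH z hk⟩
  let LL' : ∀ (z : Fin 4) (k : F4), k ∈ KK (m * e) → HH (m * e) := fun z k hk => ⟨L z k, L_mem_HH z hk⟩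
  have XR : ∀ z k hk, XH hX e (RR z k hk) = X (R z k) := fun _ _ _ => rfl
  have XL : ∀ z k hk, XH hX e (LL' z k hk) = (X (R z k))⁻¹ := fun z k hk => X_L hX hC z hk
  have cRL : ∀ z k hk k' hk', Commute (RR z k hk) (LL' z k' hk') := fun z k hk k' hk' =>
    Subtype.ext (RL_comm z k k').eq
  set y := RR 0 (cm 2 3) (hcm 2 3) with hy
  set t := LL' 0 (cm 2 3) (hcm 2 3) with ht
  have Xy : XH hX e y = a := hG.1
  have Xt : XH hX e t = a⁻¹ := (XL 0 _ (hcm 2 3)).trans (by rw [hG.1])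
  have lR0 : ∀ k hk, KT.P (XH hX e) y t (RR 0 k hk) 0 := fun k hk => KT.P_zero (cRL 0 k hk _ (hcm 2 3))
  have lL0 : ∀ k hk, KT.P (XH hX e) y t (LL' 0 k hk) 1 := fun k hk =>
    (lR0 _ (hcm 2 3)).next (Or.inl rfl) (cRL 0 _ (hcm 2 3) k hk).symm
  have pm : ∀ c : C, c = a ∨ c = a⁻¹ → c⁻¹ = a ∨ c⁻¹ = a⁻¹ := by
    rintro c (rfl | rfl)
    · exact Or.inr rfl
    · left; simp
  have mid : ∀ j, j ≠ 0 → ∃ i k, KT.P (XH hX e) y t (RR j (cm i k) (hcm i k)) 1 ∧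
      KT.P (XH hX e) y t (LL' j (cm i k) (hcm i k)) 1 ∧
      (X (R j (cm i k)) = a ∨ X (R j (cm i k)) = a⁻¹) := by
    intro j hj
    obtain ⟨i, hi0, hij, -⟩ := fourth 0 j j
    obtain ⟨k, hk0, hkj, hki⟩ := fourth 0 j i
    have h0 := hG.2.2 0 i k hi0 hk0 hki.symm hi0 hk0
    have h1 := hG.2.2 j i k hi0 hk0 hki.symm hij hkj
    refine ⟨i, k, ?_, ?_, h1⟩
    · refine (lR0 _ (hcm i k)).next ?_ (Subtype.ext (RR_comm hj.symm (pz_cm hi0 hk0) (pz_cm hij hkj)).eq)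
      rw [Xy]; exact h0
    · refine (lR0 _ (hcm i k)).next ?_ (Subtype.ext (LR_comm hj.symm (pz_cm hi0 hk0) (pz_cm hij hkj)).eq)
      rw [Xy]; exact h0
  have all : ∀ z k hk, KT.P (XH hX e) y t (RR z k hk) 2 ∧ KT.P (XH hX e) y t (LL' z k hk) 2 := by
    intro z k hk
    by_cases hz : z = 0
    · subst hz
      exact ⟨(lR0 k hk).succ.succ, (lL0 k hk).succ⟩
    · obtain ⟨i, l, h1, h2, h3⟩ := mid z hz
      refine ⟨h2.next ?_ (cRL z k hk _ (hcm i l)), h1.next ?_ (cRL z _ (hcm i l) k hk).symm⟩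
      · rw [Xy, XL z _ (hcm i l)]; exact pm _ h3
      · rw [Xy]; exact h3
  refine KT.main (X := XH hX e) (y := y) (t := t) he hC (by rw [Xy, Xt]) ?_ 
    (HH_noreal (Nat.mul_pos hm he)) (G := ((↑) : HH (m*e) → MulAut F4) ⁻¹' (Hgen (m * e)))
    Subgroup.closure_closure_coe_preimage ?_ f
  · intro h
    rw [Xy]
    exact X_HH_mem hX hC hG h.2
  · rintro ⟨g, hg⟩ ⟨z, k, hk, h⟩
    rcases h with h | h
    · simp only at h; subst h; exact (all z k hk).1
    · simp only at h; subst h; exact (all z k hk).2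

end

theorem exists_sub (m e : ℕ) (hm : 0 < m) (he : 0 < e) (χ : SS m →* Multiplicative (ZMod e)) :
    ∃ (Γ : Type) (_ : Group Γ) (j : Γ →* SS m), Group.FG Γ ∧ Function.Injective j ∧
      (∃ g : Γ, g ≠ 1) ∧ (∀ g, χ (j g) = 1) ∧ ∀ f : Γ →* Multiplicative ℝ, f = 1 := by
  classical
  have : NeZero e := ⟨he.ne'⟩
  let C := Multiplicative (ZMod e)
  have hC : ∀ c : C, c ^ e = 1 := by
    intro c
    have : (e • c.toAdd : ZMod e) = 0 := by simp
    exact this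
  let X : MulAut F4 → C := fun g => if h : g ∈ SS m then χ ⟨g, h⟩ else 1
  have hXd : ∀ g (h : g ∈ SS m), X g = χ ⟨g, h⟩ := fun g h => dif_pos h
  have hX : CX m X := ⟨by
    intro a ha b hb
    rw [hXd a ha, hXd b hb, hXd _ (mul_mem ha hb), ← map_mul χ]; rfl⟩
  obtain ⟨γ, a, hG⟩ := exists_good hX
  have hY := hX.tw γ
  have hN : 0 < m * e := Nat.mul_pos hm he
  let j : (XH hY e).ker →* SS m := 
    ((MulAut.conjNormal γ).toMonoidHom.comp (Subgroup.inclusion (HH_le_SS m e))).comp (XH hY e).ker.subtype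
  have hjd : ∀ g : (XH hY e).ker, (j g : MulAut F4) = γ * g.1.1 * γ⁻¹ := fun g => rfl
  refine ⟨(XH hY e).ker, inferInstance, j, ?_, ?_, ?_, ?_, ?_⟩
  · have h1 : Group.FG (HH (m * e)) := (Group.fg_iff_subgroup_fg _).2 (HH_fg hN)
    have h2 : (XH hY e).ker.FiniteIndex := inferInstance
    exact Subgroup.fg_of_index_ne_zero _
  · intro g h hgh
    have := congrArg Subtype.val hgh
    rw [hjd, hjd] at this
    exact Subtype.ext (Subtype.ext (mul_left_cancel (mul_right_cancel this)))
  · refine ⟨⟨⟨R 0 ((of 1 ^ (m * e)) ^ e), R_mem_HH 0 (pow_mem (pow_mem_KK _ 1) e)⟩, ?_⟩, ?_⟩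
    · rw [MonoidHom.mem_ker]
      have : (⟨R 0 ((of 1 ^ (m * e)) ^ e), R_mem_HH 0 (pow_mem (pow_mem_KK _ 1) e)⟩ : HH (m * e)) =
          (⟨R 0 (of 1 ^ (m * e)), R_mem_HH 0 (pow_mem_KK _ 1)⟩ : HH (m * e)) ^ e :=
        Subtype.ext (map_pow (R 0) _ e)
      rw [this, map_pow (XH hY e)]
      exact hC _
    · intro h
      have h1 : R 0 (((of 1 : F4) ^ (m * e)) ^ e) = 1 := congrArg (fun g => g.1.1) h
      have h2 := congrArg (fun g : MulAut F4 => g (of 0)) h1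
      simp only [R_self, MulAut.one_apply] at h2
      have h3 := congrArg (FreeGroup.lift (fun i : Fin 4 => if i = 1 then Multiplicative.ofAdd (1 : ℤ) else 1)) h2
      simp [pz] at h3

      omega
  · intro g
    have h1 : X (γ * g.1.1 * γ⁻¹) = 1 := g.2
    rw [hXd _ (SS_conj γ (HH_le_SS m e g.1.2))] at h1
    rw [← h1]
    rfl
  · exact XH_noreal hm he hY hC hG

end FA

namespace FA
open FreeGroup (of lift)

lemma pr_pow_mul {G : Type*} [Group G] (x u : G) (n : ℕ) :
    pr (fun i => x ^ i * u * (x ^ i)⁻¹) n * x ^ n = (x * u) ^ n := by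
  induction n with
  | zero => simp [pr]
  | succ n ih =>
    rw [pow_succ (x * u), ← ih]
    simp only [pr]
    group

lemma ratRot_M {m : ℕ} (ρ : SS m →* Equiv.Perm 𝕊) (hl : ∀ g, ∃ F, LL.IsLift (ρ g) F)
    (M : F4 →* MulAut F4) {c b : MulAut F4} (hc : c ∈ SS m) (hb : b ∈ SS m) {x u : F4}
    (hM : ∀ w ∈ KK m, M w ∈ SS m) (hcM : ∀ w, c * M w * c⁻¹ = M (x * w * x⁻¹))
    (hbM : ∀ w, b * M w * b⁻¹ = M (b w)) (bx : b x = x * u) (bu : b u = u)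
    (hu : u ∈ KK m) (hx : x ^ m ∈ KK m) : LL.RatRot m (ρ ⟨M u, hM u hu⟩) := by
  have key : ∀ i, c ^ i * M u * (c ^ i)⁻¹ = M (x ^ i * u * (x ^ i)⁻¹) := by
    intro i
    induction i with
    | zero => simp
    | succ i ih =>
      have : c ^ (i+1) * M u * (c ^ (i+1))⁻¹ = c * (c ^ i * M u * (c ^ i)⁻¹) * c⁻¹ := by
        rw [pow_succ']; group
      rw [this, ih, hcM, pow_succ']
      congr 1; group
  have hpr : ∀ n, pr (fun i => c ^ i * M u * (c ^ i)⁻¹) n = M ((x * u) ^ n * (x ^ n)⁻¹) := by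
    intro n
    rw [← pr_pow_mul, mul_inv_cancel_right, pr_map]
    simp only [key]
  have hprS : ∀ n, ((pr (fun i => (⟨c, hc⟩ : SS m) ^ i * ⟨M u, hM u hu⟩ * (⟨c, hc⟩ ^ i)⁻¹) n : SS m) : MulAut F4)
      = M ((x * u) ^ n * (x ^ n)⁻¹) := by
    intro n
    rw [← hpr]
    exact pr_map (SS m).subtype _ n
  apply LL.ratRot_of_relations ρ hl ⟨M u, hM u hu⟩ ⟨c, hc⟩ ⟨b, hb⟩ ⟨M (x ^ m), hM _ hx⟩ m
  · intro i
    apply Subtype.ext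
    simp only [Subgroup.coe_mul, Subgroup.coe_inv, hprS, Subgroup.coe_pow]
    rw [key, hbM]
    simp only [map_mul b, map_inv b, map_pow b, bx, bu]
    rw [← map_mul M, ← map_inv M, ← map_mul M]
    congr 1; group
  · apply Subtype.ext
    simp only [Subgroup.coe_mul, Subgroup.coe_inv, hprS]
    rw [hbM, map_pow b, bx, ← map_mul M]
    congr 1; group

lemma ratRot_RL {m : ℕ} (ρ : SS m →* Equiv.Perm 𝕊) (hl : ∀ g, ∃ F, LL.IsLift (ρ g) F)
    {z l : Fin 4} (hzl : l ≠ z) {u : F4} (hu : u ∈ KK m) (hzu : pz z u = u) (hlu : pz l u = u) :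
    LL.RatRot m (ρ ⟨R z u, R_mem_SS z hu⟩) ∧ LL.RatRot m (ρ ⟨L z u, L_mem_SS z hu⟩) := by
  constructor
  · exact ratRot_M ρ hl (R z) (c := cz z (of l)) (b := R l u) (x := of l) (cz_mem_SS m z _)
      (R_mem_SS l hu) (fun w hw => R_mem_SS z hw) (cz_conj_R z _) (R_conj_R hzl.symm hzu)
      (by rw [R_self, hlu]) (R_fix hlu u) hu (pow_mem_KK m l)
  · exact ratRot_M ρ hl (L z) (c := cz z (of l)) (b := R l u) (x := of l) (cz_mem_SS m z _)
      (R_mem_SS l hu) (fun w hw => L_mem_SS z hw) (cz_conj_L z _) (R_conj_L hzl.symm hzu)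
      (by rw [R_self, hlu]) (R_fix hlu u) hu (pow_mem_KK m l)

lemma ratRot_Sgen {m : ℕ} (ρ : SS m →* Equiv.Perm 𝕊) (hl : ∀ g, ∃ F, LL.IsLift (ρ g) F)
    {g : MulAut F4} (hg : g ∈ Sgen m) (hgS : g ∈ SS m) : LL.RatRot (m * m) (ρ ⟨g, hgS⟩) := by
  rcases hg with ⟨z, i, hi, rfl⟩ | ⟨z, i, j, hi, hj, hij, rfl⟩ | ⟨z, i, hi, rfl⟩
  · obtain ⟨l, h1, h2, -⟩ := fourth z i i
    exact (ratRot_RL ρ hl h1 (pow_mem_KK m i) (pz_pow hi m) (pz_pow h2.symm m)).1.mul_left m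
  · obtain ⟨l, h1, h2, h3⟩ := fourth z i j
    exact (ratRot_RL ρ hl h1 (cm_mem_KK m i j) (pz_cm hi hj) (pz_cm h2.symm h3.symm)).1.mul_left m
  · obtain ⟨l, h1, h2, -⟩ := fourth z i i
    have h := ratRot_RL ρ hl h1 (pow_mem_KK m i) (pz_pow hi m) (pz_pow h2.symm m)
    refine LL.ratRot_sq ρ hl (κ := ⟨kap z (of i), hgS⟩) (Subtype.ext (RL_comm z _ _).eq) ?_ h.1 h.2
    apply Subtype.ext
    exact (map_pow (kap z) (of i) m).symm

def gensS (m : ℕ) : Set (SS m) := {s | ∃ γ : MulAut F4, ∃ g ∈ Sgen m, (s : MulAut F4) = γ * g * γ⁻¹}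

lemma closure_gensS (m : ℕ) : Subgroup.closure (gensS m) = ⊤ := by
  have h : gensS m = ((↑) : SS m → MulAut F4) ⁻¹' (Group.conjugatesOfSet (Sgen m)) := by
    ext s
    simp only [gensS, Set.mem_setOf_eq, Set.mem_preimage, Group.mem_conjugatesOfSet_iff, isConj_iff]
    constructor
    · rintro ⟨γ, g, hg, h⟩; exact ⟨g, hg, γ, h.symm⟩
    · rintro ⟨g, hg, γ, h⟩; exact ⟨γ, g, hg, h.symm⟩
  rw [h]
  exact Subgroup.closure_closure_coe_preimage

lemma ratRot_gensS {m : ℕ} (ρ : SS m →* Equiv.Perm 𝕊) (hl : ∀ g, ∃ F, LL.IsLift (ρ g) F) :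
    ∀ s ∈ gensS m, LL.RatRot (m * m) (ρ s) := by
  rintro s ⟨γ, g, hg, h⟩
  have hgS : g ∈ SS m := Subgroup.subset_normalClosure hg
  have := ratRot_Sgen (ρ.comp (MulAut.conjNormal γ).toMonoidHom) (fun g => hl _) hg hgS
  have h' : s = MulAut.conjNormal γ ⟨g, hgS⟩ := Subtype.ext h
  rw [h']
  exact this

end FA

namespace FA
open FreeGroup (of lift)

section block
variable {n : ℕ} (ι : Fin 4 ↪ Fin n)

def Bend (θ : MulAut F4) : FreeGrp n →* FreeGrp n := by
  classical
  exact lift (fun j => if h : ∃ i, ι i = j then FreeGroup.map ι (θ (of h.choose)) else of j)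

lemma Bend_in (θ : MulAut F4) (i : Fin 4) : Bend ι θ (of (ι i)) = FreeGroup.map ι (θ (of i)) := by
  have h : ∃ i', ι i' = ι i := ⟨i, rfl⟩
  have h' : h.choose = i := ι.injective h.choose_spec
  rw [Bend, FreeGroup.lift_apply_of, dif_pos h, h']

lemma Bend_out (θ : MulAut F4) {j : Fin n} (h : ∀ i, ι i ≠ j) : Bend ι θ (of j) = of j := by
  have h' : ¬ ∃ i, ι i = j := fun ⟨i, hi⟩ => h i hi
  rw [Bend, FreeGroup.lift_apply_of, dif_neg h']

lemma Bend_map (θ : MulAut F4) (w : F4) : Bend ι θ (FreeGroup.map ι w) = FreeGroup.map ι (θ w) := by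
  have : (Bend ι θ).comp (FreeGroup.map ι) = (FreeGroup.map ι).comp θ.toMonoidHom := by
    apply FreeGroup.ext_hom; intro i
    simp [Bend_in]
  exact DFunLike.congr_fun this w

lemma Bend_mul (θ φ : MulAut F4) : (Bend ι θ).comp (Bend ι φ) = Bend ι (θ * φ) := by
  apply FreeGroup.ext_hom; intro j
  by_cases h : ∃ i, ι i = j
  · obtain ⟨i, rfl⟩ := h
    rw [MonoidHom.comp_apply, Bend_in, Bend_in, Bend_map]; rfl
  · push Not at h
    rw [MonoidHom.comp_apply, Bend_out ι _ h, Bend_out ι _ h, Bend_out ι _ h]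

lemma Bend_one : Bend ι 1 = MonoidHom.id _ := by
  apply FreeGroup.ext_hom; intro j
  by_cases h : ∃ i, ι i = j
  · obtain ⟨i, rfl⟩ := h
    rw [Bend_in]; simp
  · push Not at h
    rw [Bend_out ι _ h]; rfl

def B : MulAut F4 →* AutF n where
  toFun θ := MonoidHom.toMulEquiv (Bend ι θ) (Bend ι θ⁻¹)
    (by rw [Bend_mul, inv_mul_cancel, Bend_one]) (by rw [Bend_mul, mul_inv_cancel, Bend_one])
  map_one' := by
    apply mulAut_ext; intro i
    exact DFunLike.congr_fun (Bend_one ι) (of i)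
  map_mul' θ φ := by
    apply mulAut_ext; intro i
    exact (DFunLike.congr_fun (Bend_mul ι θ φ) (of i)).symm

lemma B_in (θ : MulAut F4) (i : Fin 4) : B ι θ (of (ι i)) = FreeGroup.map ι (θ (of i)) := Bend_in ι θ i
lemma B_out (θ : MulAut F4) {j : Fin n} (h : ∀ i, ι i ≠ j) : B ι θ (of j) = of j := Bend_out ι θ h

lemma B_inj : Function.Injective (B ι) := by
  intro θ φ h
  apply mulAut_ext; intro i
  have := DFunLike.congr_fun h (of (ι i))
  rw [B_in, B_in] at this
  exact FreeGroup.map_injective ι.injective this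

lemma B_comm (ι' : Fin 4 ↪ Fin n) (hd : ∀ i i', ι i ≠ ι' i') (θ φ : MulAut F4) :
    Commute (B ι θ) (B ι' φ) := by
  have fx : ∀ (κ κ' : Fin 4 ↪ Fin n) (_ : ∀ i i', κ i ≠ κ' i') (φ : MulAut F4) (w : F4),
      B κ φ (FreeGroup.map κ' w) = FreeGroup.map κ' w := by
    intro κ κ' h φ w
    have : (B κ φ).toMonoidHom.comp (FreeGroup.map κ') = FreeGroup.map κ' := by
      apply FreeGroup.ext_hom; intro i
      simpa using B_out κ φ (fun i' => h i' i)
    exact DFunLike.congr_fun this w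
  apply mulAut_ext; intro j
  rw [MulAut.mul_apply, MulAut.mul_apply]
  by_cases h : ∃ i, ι i = j
  · obtain ⟨i, rfl⟩ := h
    rw [B_out ι' φ (fun i' => (hd i i').symm), B_in, fx ι' ι (fun a b => (hd b a).symm)]
  · push Not at h
    by_cases h' : ∃ i, ι' i = j
    · obtain ⟨i, rfl⟩ := h'
      rw [B_out ι θ h, B_in, fx ι ι' hd]
    · push Not at h'
      rw [B_out ι θ h, B_out ι' φ h', B_out ι θ h]

def NN (A : Type*) [CommGroup A] : Subgroup (MulAut F4) where
  carrier := {g | ∀ (f : F4 →* A) (x : F4), f (g x) = f x}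
  one_mem' := fun _ _ => rfl
  mul_mem' := by
    intro a b ha hb f x
    have h : (a * b) x = a (b x) := rfl
    rw [h, ha f (b x), hb f x]
  inv_mem' := by
    intro a ha f x
    have h := ha f (a⁻¹ x)
    have h' : a (a⁻¹ x) = x := a.apply_symm_apply x
    rw [h'] at h
    exact h.symm

lemma SS_le_NN {A : Type*} [CommGroup A] {m : ℕ} (hA : ∀ a : A, a ^ m = 1) : SS m ≤ NN A := by
  have hN : (NN A).Normal := ⟨by
    intro g hg γ f x
    have h1 := hg (f.comp γ.toMonoidHom) (γ⁻¹ x)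
    have h2 : γ (γ⁻¹ x) = x := γ.apply_symm_apply x
    have h3 : f (γ (g (γ⁻¹ x))) = f (γ (γ⁻¹ x)) := h1
    rw [h2] at h3
    exact h3⟩
  apply Subgroup.normalClosure_le_normal
  intro g hg f x
  suffices h : f.comp g.toMonoidHom = f from DFunLike.congr_fun h x
  apply FreeGroup.ext_hom; intro j
  show f (g (of j)) = f (of j)
  rcases hg with ⟨z, i, hi, rfl⟩ | ⟨z, i, j', hi, hj, hij, rfl⟩ | ⟨z, i, hi, rfl⟩
  · by_cases h : j = z
    · subst h; rw [R_self, pz_pow hi, map_mul, map_pow, hA, mul_one]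
    · rw [R_ne h]
  · by_cases h : j = z
    · subst h; rw [R_self, pz_cm hi hj, cm]; simp only [map_mul, map_inv]
      rw [mul_comm (f (of i)), mul_inv_cancel_right, mul_inv_cancel, mul_one]
    · rw [R_ne h]
  · by_cases h : j = z
    · subst h; rw [kap_self]; simp only [map_mul, map_inv]
      rw [mul_right_comm, inv_mul_cancel, one_mul]
    · rw [kap_ne h]

lemma B_mem {m : ℕ} {g : MulAut F4} (hg : g ∈ SS m) : B ι g ∈ AutCongr n m := by
  intro x
  suffices h : (modMProj n m).comp (B ι g).toMonoidHom = modMProj n m from DFunLike.congr_fun h x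
  apply FreeGroup.ext_hom; intro j
  show modMProj n m (B ι g (of j)) = modMProj n m (of j)
  by_cases h : ∃ i, ι i = j
  · obtain ⟨i, rfl⟩ := h
    have hA : ∀ a : Multiplicative (Fin n → ZMod m), a ^ m = 1 := by
      intro a
      have : m • a.toAdd = 0 := by ext i; simp
      exact this
    have := SS_le_NN hA hg ((modMProj n m).comp (FreeGroup.map ι)) (of i)
    rw [B_in]
    simpa using this
  · push Not at h
    rw [B_out ι g h]

def BS (m : ℕ) : SS m →* AutCongr n m :=
  ((B ι).comp (SS m).subtype).codRestrict (AutCongr n m) (fun s => B_mem ι s.2)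

lemma BS_inj (m : ℕ) : Function.Injective (BS ι m) := by
  intro a b h
  exact Subtype.ext (B_inj ι (congrArg Subtype.val h))

end block

open LL

lemma exists_lift {σ : Equiv.Perm 𝕊} (h : IsC1Diffeo σ) :
    ∃ F : LL, IsLift σ F ∧ ContDiff ℝ 1 F ∧ ∀ x, deriv F x ≠ 0 := by
  obtain ⟨F, ⟨hc, hm, h1, hs⟩, hC, hd⟩ := h
  let F' : CircleDeg1Lift := ⟨⟨F, hm.monotone⟩, h1⟩
  have hF : ⇑F' = F := rfl
  have hu : IsUnit F' := by
    rw [CircleDeg1Lift.isUnit_iff_bijective]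
    exact ⟨hm.injective, Continuous.surjective hc F'.tendsto_atTop F'.tendsto_atBot⟩
  obtain ⟨u, hu⟩ := hu
  have hF' : (⇑(u : CircleDeg1Lift)) = F := by rw [hu, hF]
  refine ⟨u, ?_, ?_, ?_⟩
  · intro x; rw [hF']; exact hs x
  · rw [hF']; exact hC
  · rw [hF']; exact hd

lemma final_step {m : ℕ} (hm : 0 < m) (ρ : SS m →* Equiv.Perm 𝕊) (hC : ∀ s, IsC1Diffeo (ρ s))
    (hinj : Function.Injective ρ) (χ : SS m →* Multiplicative (ZMod (m * m))) (x0 : ℝ)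
    (h : ∀ s, χ s = 1 → ∃ F, IsLift (ρ s) F ∧ F x0 = x0) : False := by
  obtain ⟨Γ, _, j, hfg, hj, ⟨g0, hg0⟩, hχ, hab⟩ := exists_sub m (m * m) hm (Nat.mul_pos hm hm) χ
  choose G hG hG0 using fun g : Γ => h (j g) (hχ g)
  have tn0 : ∀ F : LL, F x0 = x0 → tn F = 0 := by
    intro F hF
    have := CircleDeg1Lift.translationNumber_of_eq_add_int (F : CircleDeg1Lift) (x := x0) (m := 0) (by simpa using hF)
    simpa [tn] using this
  have huniq : ∀ (g : Γ) (F : LL), IsLift (ρ (j g)) F → F x0 = x0 → G g = F := by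
    intro g F h1 h2
    exact (hG g).unique h1 (by rw [tn0 _ h2, tn0 _ (hG0 g)])
  have hsm : ∀ g, ContDiff ℝ 1 (G g) ∧ ∀ x, deriv (G g) x ≠ 0 := by
    intro g
    obtain ⟨F, h1, h2, h3⟩ := exists_lift (hC (j g))
    obtain ⟨k, hk⟩ := (hG g).exists_tr h1
    have : (⇑(G g : CircleDeg1Lift)) = fun x => F x + k := by
      funext x
      rw [hk, mul_app, tr_apply]
    rw [this]
    refine ⟨h2.add contDiff_const, ?_⟩
    intro x
    rw [deriv_add_const]
    exact h3 x
  have key := thurston hfg hab (fun g => G g)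
    (by
      intro x
      have := huniq 1 1 (by rw [map_one, map_one]; exact IsLift.one) rfl
      simp only [this]; rfl)
    (by
      intro g h x
      have := huniq (g * h) (G g * G h) (by rw [map_mul, map_mul]; exact (hG g).mul (hG h))
        (by rw [mul_app, hG0, hG0])
      simp only [this]; rfl)
    (fun g => smono (G g)) (fun g => (hsm g).1) (fun g => (hsm g).2)
    (by
      intro y
      refine ⟨x0 + ((⌊y - x0⌋ : ℤ) : ℝ), ?_, ?_⟩
      · have := Int.floor_le (y - x0); linarith
      · intro g
        rw [CircleDeg1Lift.map_add_int, hG0])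
  apply hg0
  apply hj
  rw [map_one]
  apply hinj
  rw [map_one]
  ext1 p
  induction p using QuotientAddGroup.induction_on with
  | H x =>
    have := hG g0 x
    rw [key g0 x] at this
    exact this

end FA

/-- For `n ≥ 8` and `m ≥ 2`, any orientation preserving `C¹` action of
the level `m` congruence subgroup `Aut(Fₙ, m)` on the circle cannot be faithful. -/
theorem congruence_subgroup_action_not_faithful
    (n m : ℕ) (hn : 8 ≤ n) (hm : 2 ≤ m)
    (ρ : (AutCongr n m) →* Equiv.Perm 𝕊) (hρ : ∀ g : AutCongr n m, IsC1Diffeo (ρ g)) :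
    ¬ Function.Injective ρ := by
  intro hinj
  have hm0 : 0 < m := by omega
  let ι₁ : Fin 4 ↪ Fin n := ⟨fun i => ⟨i.1, by omega⟩, fun a b h => by
    simp only [Fin.mk.injEq] at h; exact Fin.ext h⟩
  let ι₂ : Fin 4 ↪ Fin n := ⟨fun i => ⟨i.1 + 4, by omega⟩, fun a b h => by
    simp only [Fin.mk.injEq] at h; exact Fin.ext (by omega)⟩
  have hd : ∀ i i', ι₁ i ≠ ι₂ i' := by
    intro i i' h
    have h' : i.1 = i'.1 + 4 := congrArg Fin.val h
    omega
  let ρ₁ := ρ.comp (FA.BS ι₁ m)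
  let ρ₂ := ρ.comp (FA.BS ι₂ m)
  have hl₁ : ∀ s, ∃ F, LL.IsLift (ρ₁ s) F := fun s => by
    obtain ⟨F, h, -⟩ := FA.exists_lift (hρ (FA.BS ι₁ m s)); exact ⟨F, h⟩
  have hl₂ : ∀ s, ∃ F, LL.IsLift (ρ₂ s) F := fun s => by
    obtain ⟨F, h, -⟩ := FA.exists_lift (hρ (FA.BS ι₂ m s)); exact ⟨F, h⟩
  have hc : ∀ s t, Commute (ρ₁ s) (ρ₂ t) := by
    intro s t
    have : Commute (FA.BS ι₁ m s) (FA.BS ι₂ m t) := Subtype.ext (FA.B_comm ι₁ ι₂ hd s.1 t.1).eq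
    exact this.map ρ
  obtain ⟨χ, x0, h | h⟩ := LL.dichotomy_action (FA.gensS m) (FA.closure_gensS m) ρ₁ ρ₂ hl₁ hl₂ hc
    (Nat.mul_pos hm0 hm0) (FA.ratRot_gensS ρ₁ hl₁) (FA.ratRot_gensS ρ₂ hl₂)
  · exact FA.final_step hm0 ρ₁ (fun s => hρ _) (hinj.comp (FA.BS_inj ι₁ m)) χ x0 h
  · exact FA.final_step hm0 ρ₂ (fun s => hρ _) (hinj.comp (FA.BS_inj ι₂ m)) χ x0 h
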